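/- arXiv:1804.08520 — 2 statements merged into one kernel-verified Lean document; each statement's English description precedes it below -/
import Mathlib

section
/- Let H₁₁ : L¹(ℝ₊)^q → L¹(ℝ₊)^p, H₁₂ : L¹(ℝ₊)^p → L¹(ℝ₊)^q, H₂₁ : L¹(ℝ₊)^r → L¹(ℝ₊)^p and H₂₂ : L¹(ℝ₊)^p → L¹(ℝ₊)^r be classical Hankel integral operators, and suppose M = I + H₁₁H₁₂ + H₂₁H₂₂ is invertible on L¹(ℝ₊)^p. Then M⁻¹ = I + K₁ + K₂ + K₃ + K₄, where each K_j is a product of two classical Hankel integral operators; in particular M⁻¹ = I + K where K maps W^{1,1}(ℝ₊)^p into itself and its restriction is a bounded operator on W^{1,1}(ℝ₊)^p. -/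
/-!
Write `H_h` for the Hankel operator with kernel `h`, and collect the four given kernels into
`a = (k₁₁ k₂₁)` and `b = (k₁₂ ; k₂₂)`, so that `M = I + H_a H_b`. Put `M' = I + H_{bᵀ} H_{aᵀ}`.
The inverse of `M` is given by the explicit formula (`inverse_eq_bezout`)

  `M⁻¹ = I - H_β H_γ - H_u H_v`,

where `β = M⁻¹ a`, `γᵀ = M'⁻¹ bᵀ`, `u = M⁻¹ (H_a b)`, `vᵀ = M'⁻¹ (H_{bᵀ} aᵀ)`, the operators acting
on each column of a kernel. Two of the four products `K_j` can therefore be taken to be zero.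

If `a` and `b` are combinations of finitely many exponentials `exp (-w t)`, the operators have
finite rank and the formula is an identity between finite matrices: let `G` be the Gram matrix
`1 / (w + w')` of the exponentials, `Q` the coefficient matrix of `H_a H_b`, and `D = diag w`.
Then `DG + GD` and `DQ + QD` factor through the original coefficients, and the same displacement
computation for `(1 + QG)⁻¹ Q` (`lyapunov`) is the asserted formula (`inverse_eq_bezout_expo`).
The exponentials `exp (-(n+1) t)` span a dense subspace of `L¹` by Weierstrass' theorem
(`dense_span_expL`), and both sides depend continuously on `(a, b)` where `M` and `M'` are
invertible, which gives the general formula.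

Invertibility of `M'` has to be derived from that of `M` (`isUnit_transpose`). Subtracting from `M`
a product `H_z H_z'` with exponential kernels close to `a`, `b` leaves an operator close to `I`,
so `M` is invertible modulo finite rank, and its invertibility is that of a finite matrix; the
matrix belonging to `M'` is, up to exchanging the two factors, its transpose (`pairing`).

For the Sobolev part, `f ∈ W^{1,1}` with derivative `g` means `f(t) = -∫_t^∞ g`, and Fubini's
theorem gives `(H_h f)' = (∫ g) h - H_h g`, which is bounded in `g ∈ L¹` (`IsTail.hankel`). Hence
Hankel operators, and products and sums of them, are bounded on `W^{1,1}` (`HasDer.condH1`).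
-/

open MeasureTheory Set Matrix

noncomputable section

def μP : Measure ℝ := volume.restrict (Ici 0)

/-- `L¹(ℝ₊)ⁿ`. -/
abbrev L1V (n : ℕ) := Lp (Fin n → ℂ) 1 μP

/-- `(φ, φ')` represents an element of the Sobolev space `W^{1,1}(ℝ₊)ⁿ`: `φ` and `φ'` are
integrable on `[0,∞)` and `φ` is absolutely continuous on compact subintervals of `[0,∞)`
with derivative `φ'`. -/
def SobRep (n : ℕ) (φ φ' : ℝ → Fin n → ℂ) : Prop :=
  IntegrableOn φ (Ici 0) ∧ IntegrableOn φ' (Ici 0) ∧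
  ∀ t ∈ Ici (0:ℝ), φ t = φ 0 + ∫ s in (0:ℝ)..t, φ' s

/-- The Sobolev norm `‖φ‖_{L¹} + ‖φ'‖_{L¹}`. -/
def sobNorm {n : ℕ} (φ φ' : ℝ → Fin n → ℂ) : ℝ :=
  (∫ t in Ici (0:ℝ), ‖φ t‖) + ∫ t in Ici (0:ℝ), ‖φ' t‖

/-- Condition (H1): `K` maps `W^{1,1}(ℝ₊)^p` into `W^{1,1}(ℝ₊)^q` and its restriction is
bounded. -/
def CondH1 {p q : ℕ} (K : L1V p →L[ℂ] L1V q) : Prop :=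
  ∃ C : ℝ, ∀ (φ φ' : ℝ → Fin p → ℂ) (f : L1V p), SobRep p φ φ' → ⇑f =ᵐ[μP] φ →
    ∃ ψ ψ' : ℝ → Fin q → ℂ, SobRep q ψ ψ' ∧ ⇑(K f) =ᵐ[μP] ψ ∧
      sobNorm ψ ψ' ≤ C * sobNorm φ φ'

/-- Condition (H2): `(Kφ)' + K(φ') = k(·) φ(0)` for every `φ ∈ W^{1,1}(ℝ₊)^p`, where
`k ∈ L¹(ℝ₊)^{q×p}`. -/
def CondH2 {p q : ℕ} (k : ℝ → Matrix (Fin q) (Fin p) ℂ) (K : L1V p →L[ℂ] L1V q) : Prop :=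
  (∀ i j, IntegrableOn (fun t => k t i j) (Ici 0)) ∧ (∀ t < (0:ℝ), k t = 0) ∧
  ∀ (φ φ' : ℝ → Fin p → ℂ) (f f' : L1V p), SobRep p φ φ' →
    ⇑f =ᵐ[μP] φ → ⇑f' =ᵐ[μP] φ' →
    ∀ ψ ψ' : ℝ → Fin q → ℂ, SobRep q ψ ψ' → ⇑(K f) =ᵐ[μP] ψ →
      (fun t => ψ' t + (⇑(K f')) t) =ᵐ[μP] fun t => (k t).mulVec (φ 0)

/-- `K` is the classical Hankel integral operator with kernel `k ∈ L¹(ℝ₊)^{q×p}`. -/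
def IsClassicalHankel {p q : ℕ} (k : ℝ → Matrix (Fin q) (Fin p) ℂ)
    (K : L1V p →L[ℂ] L1V q) : Prop :=
  (∀ i j, IntegrableOn (fun t => k t i j) (Ici 0)) ∧ (∀ t < (0:ℝ), k t = 0) ∧
  ∀ f : L1V p, ⇑(K f) =ᵐ[μP] fun t => ∫ s in Ici (0:ℝ), (k (t + s)).mulVec (f s)

/-- `K` is a product of two classical Hankel integral operators. -/
def ProdOfTwoHankels {p : ℕ} (K : L1V p →L[ℂ] L1V p) : Prop :=
  ∃ (m : ℕ) (A : L1V m →L[ℂ] L1V p) (B : L1V p →L[ℂ] L1V m)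
    (kA : ℝ → Matrix (Fin p) (Fin m) ℂ) (kB : ℝ → Matrix (Fin m) (Fin p) ℂ),
    IsClassicalHankel kA A ∧ IsClassicalHankel kB B ∧ K = A.comp B

/-! ### Hankel-type operators with finitely many exponential kernels -/

section Abstract

set_option linter.unusedSectionVars false

variable {E : Type*} [NormedAddCommGroup E] [NormedSpace ℂ E]

/-- The matrix operator `(Hm H k f) i = ∑ l, H (k i l) (f l)` attached to a matrix kernel `k`, where
`H h` is the scalar operator with kernel `h`. Kernel entries and functions lie in the same space `E`. -/
def Hm (H : E →L[ℂ] E →L[ℂ] E) {ι κ : Type*} [Fintype ι] [Fintype κ] (k : ι → κ → E) :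
    (κ → E) →L[ℂ] (ι → E) :=
  ContinuousLinearMap.pi fun i => ∑ l, (H (k i l)).comp (ContinuousLinearMap.proj l)

variable (H : E →L[ℂ] E →L[ℂ] E) {ι κ : Type*} [Fintype ι] [Fintype κ]

lemma Hm_apply (k : ι → κ → E) (f : κ → E) (i : ι) :
    Hm H k f i = ∑ l, H (k i l) (f l) := by
  simp [Hm]

lemma continuous_Hm : Continuous fun k : ι → κ → E => Hm H k := by
  classical
  have h : (fun k : ι → κ → E => Hm H k) = fun k => ∑ i, ∑ l,
      (ContinuousLinearMap.single ℂ (fun _ : ι => E) i).comp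
        ((H (k i l)).comp (ContinuousLinearMap.proj l)) := by
    ext k f i
    simp [Hm_apply, Finset.sum_apply, Pi.single_apply]
  rw [h]
  fun_prop

/-- The operator `X` applied to each column of the matrix kernel `k`. -/
def colAct {σ : Type*} (X : (κ → E) →L[ℂ] (ι → E)) (k : κ → σ → E) : ι → σ → E :=
  fun i s => X (fun l => k l s) i

/-- Transpose of a matrix kernel. It is not conjugated. -/
def tr {σ τ : Type*} (k : σ → τ → E) : τ → σ → E := fun j i => k i j

/-- The operator `1 + H_a H_b`. -/
def prodOp (a : ι → κ → E) (b : κ → ι → E) : (ι → E) →L[ℂ] (ι → E) :=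
  1 + (Hm H a).comp (Hm H b)

lemma continuous_prodOp :
    Continuous fun x : (ι → κ → E) × (κ → ι → E) => prodOp H x.1 x.2 := by
  have h1 := (continuous_Hm H (ι := ι) (κ := κ)).comp
    (continuous_fst (X := ι → κ → E) (Y := κ → ι → E))
  have h2 := (continuous_Hm H (ι := κ) (κ := ι)).comp
    (continuous_snd (X := ι → κ → E) (Y := κ → ι → E))
  exact continuous_const.add (h1.clm_comp h2)

section Finite

variable {T : Type*} [Fintype T] (e : T → E) (ell : T → E →L[ℂ] ℂ) (w : T → ℂ)

/-- Synthesis: the `E`-valued vector with coefficients `z` in the functions `e t`. -/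
def synth (ι : Type*) : (T × ι → ℂ) →ₗ[ℂ] (ι → E) where
  toFun z := fun i => ∑ t, z (t, i) • e t
  map_add' x y := by ext i; simp [add_smul, Finset.sum_add_distrib]
  map_smul' c x := by ext i; simp [mul_smul, Finset.smul_sum]

/-- Analysis: the values of the functionals `ell t` on the components of `f`. -/
def anal (ι : Type*) : (ι → E) →ₗ[ℂ] (T × ι → ℂ) where
  toFun f := fun x => ell x.1 (f x.2)
  map_add' x y := by ext i; simp
  map_smul' c x := by ext i; simp

/-- The Gram matrix `ell t (e u) = 1 / (w t + w u)`, repeated on each component `ι`. -/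
def gramMat (ι : Type*) [DecidableEq ι] : Matrix (T × ι) (T × ι) ℂ :=
  fun I J => if I.2 = J.2 then 1 / (w I.1 + w J.1) else 0

/-- The matrix of `H_a H_b` for `a = expo e ca`, `b = expo e cb`, read between `anal` and `synth`; see
`Hm_Hm_expo`. -/
def prodCoeff (ca : T → ι → κ → ℂ) (cb : T → κ → ι → ℂ) : Matrix (T × ι) (T × ι) ℂ :=
  fun I J => ∑ l, ca I.1 I.2 l * (1 / (w I.1 + w J.1)) * cb J.1 l J.2

/-- The matrix kernel `∑ t, c t • e t`; in the application `e t` are exponentials. -/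
def expo {σ τ : Type*} (c : T → σ → τ → ℂ) : σ → τ → E := fun i l => ∑ t, c t i l • e t

lemma anal_synth [DecidableEq ι] (hl : ∀ i j, ell i (e j) = 1 / (w i + w j)) (z : T × ι → ℂ) :
    anal ell ι (synth e ι z) = gramMat w ι *ᵥ z := by
  ext ⟨t, i⟩
  simp only [anal, synth, LinearMap.coe_mk, AddHom.coe_mk, map_sum, map_smul, hl, smul_eq_mul,
    mulVec, dotProduct, gramMat, Fintype.sum_prod_type]
  refine Finset.sum_congr rfl fun u _ => ?_
  simp [mul_comm]

lemma gramMat_transpose [DecidableEq ι] : (gramMat w ι)ᵀ = gramMat w ι := by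
  ext I J
  simp [gramMat, add_comm, eq_comm]

lemma prodCoeff_transpose (ca : T → ι → κ → ℂ) (cb : T → κ → ι → ℂ) :
    (prodCoeff w ca cb)ᵀ = prodCoeff w (fun t => tr (cb t)) (fun t => tr (ca t)) := by
  ext I J
  simp only [prodCoeff, tr, transpose_apply]
  refine Finset.sum_congr rfl fun l _ => ?_
  rw [add_comm]; ring

lemma tr_expo {σ τ : Type*} (c : T → σ → τ → ℂ) :
    tr (expo e c) = expo e (fun t => tr (c t)) := rfl

lemma Hm_expo (hH : ∀ j g, H (e j) g = ell j g • e j) (c : T → ι → κ → ℂ) (f : κ → E) (i : ι) :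
    Hm H (expo e c) f i = ∑ t, (∑ l, c t i l * ell t (f l)) • e t := by
  simp only [Hm_apply, expo, map_sum, map_smul, _root_.sum_apply,
    _root_.smul_apply, hH, Finset.sum_smul, mul_smul]
  exact Finset.sum_comm

lemma Hm_Hm_expo (hH : ∀ j g, H (e j) g = ell j g • e j)
    (hl : ∀ i j, ell i (e j) = 1 / (w i + w j))
    (ca : T → ι → κ → ℂ) (cb : T → κ → ι → ℂ) (f : ι → E) :
    Hm H (expo e ca) (Hm H (expo e cb) f) = synth e ι (prodCoeff w ca cb *ᵥ anal ell ι f) := by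
  ext i
  rw [Hm_expo H e ell hH]
  simp only [synth, LinearMap.coe_mk, AddHom.coe_mk]
  refine Finset.sum_congr rfl fun t _ => ?_
  congr 1
  simp only [Hm_expo H e ell hH, mulVec, dotProduct, prodCoeff, anal, LinearMap.coe_mk,
    AddHom.coe_mk, map_sum, map_smul, hl, smul_eq_mul, Fintype.sum_prod_type, Finset.mul_sum,
    Finset.sum_mul]
  rw [Finset.sum_comm]
  refine Finset.sum_congr rfl fun u _ => ?_
  rw [Finset.sum_comm]
  refine Finset.sum_congr rfl fun u _ => ?_
  refine Finset.sum_congr rfl fun u _ => ?_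
  ring

lemma prodOp_expo (hH : ∀ j g, H (e j) g = ell j g • e j)
    (hl : ∀ i j, ell i (e j) = 1 / (w i + w j))
    (ca : T → ι → κ → ℂ) (cb : T → κ → ι → ℂ) (f : ι → E) :
    prodOp H (expo e ca) (expo e cb) f = f + synth e ι (prodCoeff w ca cb *ᵥ anal ell ι f) := by
  rw [← Hm_Hm_expo H e ell w hH hl]; rfl

/-- If `(1 + GQ) z = 0`, then `M = 1 + H_a H_b` kills `synth (Q z)`; hence injectivity of `M` forces
`G Q z = 0`, that is, `z = 0`. -/
lemma isUnit_coeff [DecidableEq ι] [DecidableEq T] (hH : ∀ j g, H (e j) g = ell j g • e j)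
    (hl : ∀ i j, ell i (e j) = 1 / (w i + w j))
    (ca : T → ι → κ → ℂ) (cb : T → κ → ι → ℂ)
    (hM : IsUnit (prodOp H (expo e ca) (expo e cb))) :
    IsUnit (1 + gramMat w ι * prodCoeff w ca cb) := by
  rw [← Matrix.mulVec_injective_iff_isUnit]
  refine (injective_iff_map_eq_zero (Matrix.mulVecLin _)).2 fun z hz => ?_
  set Q := prodCoeff w ca cb
  set G := gramMat w ι
  have hz' : z + G *ᵥ (Q *ᵥ z) = 0 := by
    simpa [Matrix.add_mulVec, Matrix.mulVec_mulVec] using hz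
  obtain ⟨N, hN⟩ := hM
  have h0 : synth e ι (Q *ᵥ z) = 0 := by
    have h1 : prodOp H (expo e ca) (expo e cb) (synth e ι (Q *ᵥ z)) = 0 := by
      rw [prodOp_expo H e ell w hH hl, anal_synth e ell w hl, ← map_add, ← Matrix.mulVec_add, hz']
      simp
    have h2 := congrArg (fun X : (ι → E) →L[ℂ] (ι → E) => X (synth e ι (Q *ᵥ z))) N.inv_mul
    simp only [hN, mul_apply_eq_comp, h1, map_zero] at h2
    exact h2.symm
  have h3 := anal_synth e ell w hl (Q *ᵥ z)
  rw [h0, map_zero] at h3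
  rw [← h3, add_zero] at hz'
  exact hz'

/-- `M⁻¹` maps the span of the `e t` into itself, acting there as the matrix `(1 + QG)⁻¹`. -/
lemma inverse_synth [DecidableEq ι] [DecidableEq T] (hH : ∀ j g, H (e j) g = ell j g • e j)
    (hl : ∀ i j, ell i (e j) = 1 / (w i + w j))
    (ca : T → ι → κ → ℂ) (cb : T → κ → ι → ℂ)
    (hM : IsUnit (prodOp H (expo e ca) (expo e cb))) (L : Matrix (T × ι) (T × ι) ℂ)
    (hL : (1 + prodCoeff w ca cb * gramMat w ι) * L = 1) (z : T × ι → ℂ) :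
    Ring.inverse (prodOp H (expo e ca) (expo e cb)) (synth e ι z) = synth e ι (L *ᵥ z) := by
  have h1 : prodOp H (expo e ca) (expo e cb) (synth e ι (L *ᵥ z)) = synth e ι z := by
    rw [prodOp_expo H e ell w hH hl, anal_synth e ell w hl, ← map_add]
    congr 1
    have := congrArg (fun X => X *ᵥ z) hL
    simpa [Matrix.add_mulVec, Matrix.mulVec_mulVec, add_mul, Matrix.mul_assoc] using this
  have h2 := Ring.inverse_mul_cancel _ hM
  rw [← h1, ← mul_apply_eq_comp, h2]; rfl

/-! ### The inversion formula for exponential kernels -/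

/-- The columns of `X` as coefficients of a matrix kernel. -/
def ofMat {σ : Type*} (X : Matrix (T × ι) σ ℂ) : T → ι → σ → ℂ := fun t i l => X (t, i) l

/-- Inverse of `ofMat`. -/
def toMat {σ : Type*} (c : T → ι → σ → ℂ) : Matrix (T × ι) σ ℂ := fun I l => c I.1 I.2 l

lemma prodCoeff_ofMat (X Y : Matrix (T × ι) κ ℂ) (I J : T × ι) :
    prodCoeff w (ofMat X) (fun t => tr (ofMat Y t)) I J = (X * Yᵀ) I J / (w I.1 + w J.1) := by
  simp only [prodCoeff, ofMat, tr, Matrix.mul_apply, transpose_apply, Finset.sum_div]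
  refine Finset.sum_congr rfl fun l _ => ?_
  ring

lemma colAct_inverse_expo [DecidableEq ι] [DecidableEq T]
    (hH : ∀ j g, H (e j) g = ell j g • e j)
    (hl : ∀ i j, ell i (e j) = 1 / (w i + w j))
    (ca : T → ι → κ → ℂ) (cb : T → κ → ι → ℂ)
    (hM : IsUnit (prodOp H (expo e ca) (expo e cb))) (L : Matrix (T × ι) (T × ι) ℂ)
    (hL : (1 + prodCoeff w ca cb * gramMat w ι) * L = 1) {σ : Type*} (X : Matrix (T × ι) σ ℂ) :
    colAct (Ring.inverse (prodOp H (expo e ca) (expo e cb))) (expo e (ofMat X)) =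
      expo e (ofMat (L * X)) := by
  ext i s
  exact congrFun (inverse_synth H e ell w hH hl ca cb hM L hL (fun I => X I s)) i

/-- The matrix whose block at each `t : T` is the identity. `DG + GD` equals `unitCol * unitColᵀ`. -/
def unitCol (T ι : Type*) [DecidableEq ι] : Matrix (T × ι) ι ℂ := fun I s => if I.2 = s then 1 else 0

lemma colAct_Hm_expo [DecidableEq ι]
    (hH : ∀ j g, H (e j) g = ell j g • e j)
    (hl : ∀ i j, ell i (e j) = 1 / (w i + w j))
    (ca : T → ι → κ → ℂ) (cb : T → κ → ι → ℂ) :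
    colAct (Hm H (expo e ca)) (expo e cb) =
      expo e (ofMat (prodCoeff w ca cb * unitCol T ι)) := by
  ext i s
  simp only [colAct]
  rw [Hm_expo H e ell hH]
  simp only [expo]
  refine Finset.sum_congr rfl fun t _ => ?_
  congr 1
  simp only [map_sum, map_smul, hl, smul_eq_mul, ofMat, Matrix.mul_apply, prodCoeff, unitCol,
    Fintype.sum_prod_type, mul_ite, mul_one, mul_zero, Finset.sum_ite_eq', Finset.mem_univ,
    if_true, Finset.mul_sum]
  rw [Finset.sum_comm]
  refine Finset.sum_congr rfl fun u _ => ?_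
  refine Finset.sum_congr rfl fun u _ => ?_
  ring

/-- Displacement equation for `X = (1 + QG)⁻¹ Q`: with `D = diag w`, the matrix `DX + XD` factors
through the coefficients of the four kernels in the inversion formula. -/
lemma lyapunov [DecidableEq ι] [DecidableEq T] (hw : ∀ i j, w i + w j ≠ 0)
    (ca : T → ι → κ → ℂ) (cb : T → κ → ι → ℂ) (L R : Matrix (T × ι) (T × ι) ℂ)
    (hL : L * (1 + prodCoeff w ca cb * gramMat w ι) = 1)
    (hR : (1 + gramMat w ι * prodCoeff w ca cb) * R = 1) (I J : T × ι) :
    (w I.1 + w J.1) * (L * prodCoeff w ca cb) I J =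
      ((L * toMat ca) * (Rᵀ * toMat (fun t => tr (cb t)))ᵀ) I J +
      ((L * (prodCoeff w ca cb * unitCol T ι)) *
        (Rᵀ * ((prodCoeff w ca cb)ᵀ * unitCol T ι))ᵀ) I J := by
  set Q := prodCoeff w ca cb with hQ
  set G := gramMat w ι with hG
  let D : Matrix (T × ι) (T × ι) ℂ := Matrix.diagonal fun I => w I.1
  -- The entries of `G` and `Q` have denominators `w I + w J`, which the displacement cancels.
  have h1 : D * G + G * D = unitCol T ι * (unitCol T ι)ᵀ := by
    ext I J
    simp only [D, Matrix.add_apply, Matrix.diagonal_mul, Matrix.mul_diagonal, hG]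
    simp only [gramMat, Matrix.mul_apply, unitCol, transpose_apply]
    have := hw I.1 J.1
    by_cases h : I.2 = J.2
    · simp [h]; field_simp
    · simp [h, eq_comm]
  have h2 : D * Q + Q * D = toMat ca * (toMat (fun t => tr (cb t)))ᵀ := by
    ext I J
    simp only [D, Matrix.add_apply, Matrix.diagonal_mul, Matrix.mul_diagonal, hQ]
    simp only [prodCoeff, Matrix.mul_apply, toMat, tr, transpose_apply, Finset.mul_sum, Finset.sum_mul]
    rw [← Finset.sum_add_distrib]
    refine Finset.sum_congr rfl fun l _ => ?_
    have := hw I.1 J.1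
    field_simp
  have h3 : L * Q = Q * R := by
    calc L * Q = L * Q * ((1 + G * Q) * R) := by rw [hR, mul_one]
      _ = L * (1 + Q * G) * Q * R := by noncomm_ring
      _ = Q * R := by rw [hL, one_mul]
  -- Insert `L (1 + QG) = 1` to the left of `D` in the first term and `(1 + GQ) R = 1` to its right in
  -- the second.
  have h4 : D * (L * Q) + L * Q * D = L * (D * Q + Q * D) * R + L * Q * (D * G + G * D) * Q * R := by
    calc D * (L * Q) + L * Q * D
        = L * (1 + Q * G) * D * (Q * R) + L * Q * D * ((1 + G * Q) * R) := by
          rw [hL, hR, h3]; noncomm_ring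
      _ = _ := by noncomm_ring
  have h5 := congrFun (congrFun h4 I) J
  rw [h1, h2] at h5
  simp only [D, Matrix.add_apply, Matrix.diagonal_mul, Matrix.mul_diagonal] at h5
  rw [add_mul, mul_comm (w J.1), h5]
  simp only [Matrix.transpose_mul, Matrix.transpose_transpose, Matrix.mul_assoc]

end Finite

/-- The right-hand side `1 - H_β H_γ - H_u H_v` of the inversion formula, where with `M = prodOp H a b`
and `M' = prodOp H (tr b) (tr a)` one has `β = M⁻¹ a`, `γᵀ = M'⁻¹ bᵀ`, `u = M⁻¹ (H_a b)` and
`vᵀ = M'⁻¹ (H_{bᵀ} aᵀ)`. It is meaningful only if both are invertible: `Ring.inverse` is zero at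
non-units. -/
def bezout (a : ι → κ → E) (b : κ → ι → E) : (ι → E) →L[ℂ] (ι → E) :=
  1 - (Hm H (colAct (Ring.inverse (prodOp H a b)) a)).comp
      (Hm H (tr (colAct (Ring.inverse (prodOp H (tr b) (tr a))) (tr b))))
    - (Hm H (colAct (Ring.inverse (prodOp H a b)) (colAct (Hm H a) b))).comp
      (Hm H (tr (colAct (Ring.inverse (prodOp H (tr b) (tr a)))
        (colAct (Hm H (tr b)) (tr a)))))

section Finite

variable {T : Type*} [Fintype T] (e : T → E) (ell : T → E →L[ℂ] ℂ) (w : T → ℂ)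

/-- The inverses `L` of `1 + QG` and `R` of `1 + GQ`. As `G` is symmetric, `Rᵀ` inverts `1 + QᵀG`, the
matrix that belongs to the transposed kernels. -/
lemma exists_LR [DecidableEq ι] [DecidableEq T]
    (hH : ∀ j g, H (e j) g = ell j g • e j)
    (hl : ∀ i j, ell i (e j) = 1 / (w i + w j))
    (ca : T → ι → κ → ℂ) (cb : T → κ → ι → ℂ)
    (hM : IsUnit (prodOp H (expo e ca) (expo e cb))) :
    ∃ L R : Matrix (T × ι) (T × ι) ℂ, L * (1 + prodCoeff w ca cb * gramMat w ι) = 1 ∧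
      (1 + prodCoeff w ca cb * gramMat w ι) * L = 1 ∧
      (1 + gramMat w ι * prodCoeff w ca cb) * R = 1 ∧
      R * (1 + gramMat w ι * prodCoeff w ca cb) = 1 ∧
      (1 + prodCoeff w (fun t => tr (cb t)) (fun t => tr (ca t)) * gramMat w ι) * Rᵀ = 1 := by
  have hR := isUnit_coeff H e ell w hH hl ca cb hM
  have hL : IsUnit (1 + prodCoeff w ca cb * gramMat w ι) := by
    rw [Matrix.isUnit_iff_isUnit_det, Matrix.det_one_add_mul_comm, ← Matrix.isUnit_iff_isUnit_det]
    exact hR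
  obtain ⟨r, hr⟩ := hR
  obtain ⟨l, hl'⟩ := hL
  refine ⟨↑l⁻¹, ↑r⁻¹, ?_, ?_, ?_, ?_, ?_⟩
  · rw [← hl']; exact l.inv_mul
  · rw [← hl']; exact l.mul_inv
  · rw [← hr]; exact r.mul_inv
  · rw [← hr]; exact r.inv_mul
  · have h := congrArg Matrix.transpose r.inv_mul
    rw [hr] at h
    simpa [Matrix.transpose_mul, Matrix.transpose_add, prodCoeff_transpose,
      gramMat_transpose] using h

lemma inverse_eq_bezout_expo
    (hH : ∀ j g, H (e j) g = ell j g • e j)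
    (hl : ∀ i j, ell i (e j) = 1 / (w i + w j)) (hw : ∀ i j, w i + w j ≠ 0)
    (ca : T → ι → κ → ℂ) (cb : T → κ → ι → ℂ)
    (hM : IsUnit (prodOp H (expo e ca) (expo e cb)))
    (hM' : IsUnit (prodOp H (tr (expo e cb)) (tr (expo e ca)))) :
    Ring.inverse (prodOp H (expo e ca) (expo e cb)) = bezout H (expo e ca) (expo e cb) := by
  classical
  obtain ⟨L, R, hL, hL', hR, -, hR'⟩ := exists_LR H e ell w hH hl ca cb hM
  have key := lyapunov w hw ca cb L R hL hR
  set Q := prodCoeff w ca cb with hQ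
  have hb1 : colAct (Ring.inverse (prodOp H (expo e ca) (expo e cb))) (expo e ca) =
      expo e (ofMat (L * toMat ca)) :=
    colAct_inverse_expo H e ell w hH hl ca cb hM L hL' (toMat ca)
  have hb2 : colAct (Ring.inverse (prodOp H (tr (expo e cb)) (tr (expo e ca)))) (tr (expo e cb)) =
      expo e (ofMat (Rᵀ * toMat (fun t => tr (cb t)))) :=
    colAct_inverse_expo H e ell w hH hl _ _ hM' Rᵀ hR' (toMat (fun t => tr (cb t)))
  have hb3 := colAct_inverse_expo H e ell w hH hl ca cb hM L hL' (Q * unitCol T ι)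
  have hb4 : colAct (Ring.inverse (prodOp H (tr (expo e cb)) (tr (expo e ca))))
      (colAct (Hm H (tr (expo e cb))) (tr (expo e ca))) =
      expo e (ofMat (Rᵀ * (Qᵀ * unitCol T ι))) := by
    rw [tr_expo, tr_expo, colAct_Hm_expo H e ell w hH hl, hQ, prodCoeff_transpose]
    exact colAct_inverse_expo H e ell w hH hl _ _ hM' Rᵀ hR' _
  have hB : ∀ f, bezout H (expo e ca) (expo e cb) f =
      f - synth e ι ((L * Q) *ᵥ anal ell ι f) := by
    intro f
    have hQ2 : L * Q = prodCoeff w (ofMat (L * toMat ca))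
          (fun t => tr (ofMat (Rᵀ * toMat (fun t => tr (cb t))) t)) +
        prodCoeff w (ofMat (L * (Q * unitCol T ι)))
          (fun t => tr (ofMat (Rᵀ * (Qᵀ * unitCol T ι)) t)) := by
      ext I J
      rw [Matrix.add_apply, prodCoeff_ofMat, prodCoeff_ofMat, ← add_div, ← key,
        mul_div_cancel_left₀ _ (hw _ _)]
    rw [bezout, hb1, hb2, colAct_Hm_expo H e ell w hH hl, hb3, hb4, tr_expo, tr_expo, hQ2,
      Matrix.add_mulVec, map_add, ← Hm_Hm_expo H e ell w hH hl, ← Hm_Hm_expo H e ell w hH hl,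
      ← sub_sub]
    rfl
  have hMB : prodOp H (expo e ca) (expo e cb) * bezout H (expo e ca) (expo e cb) = 1 := by
    ext1 f
    rw [mul_apply_eq_comp, prodOp_expo H e ell w hH hl, hB, map_sub, anal_synth e ell w hl,
      sub_add, ← map_sub]
    have : (L * Q) *ᵥ anal ell ι f -
        Q *ᵥ (anal ell ι f - gramMat w ι *ᵥ (L * Q) *ᵥ anal ell ι f) = 0 := by
      have h : L * Q - Q + Q * (gramMat w ι * (L * Q)) = 0 := by
        have : (1 + Q * gramMat w ι) * L * Q = Q := by rw [hL', one_mul]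
        rw [← sub_eq_zero] at this
        rw [← this]; noncomm_ring
      have h2 := congrArg (fun X => X *ᵥ anal ell ι f) h
      simp only [Matrix.add_mulVec, Matrix.sub_mulVec, Matrix.zero_mulVec] at h2
      rw [← h2, Matrix.mulVec_sub]
      simp only [Matrix.mulVec_mulVec]
      abel
    rw [this, map_zero, sub_zero]; rfl
  calc _ = Ring.inverse (prodOp H (expo e ca) (expo e cb)) *
        (prodOp H (expo e ca) (expo e cb) * bezout H (expo e ca) (expo e cb)) := by
        rw [hMB, mul_one]
    _ = _ := by rw [← mul_assoc, Ring.inverse_mul_cancel _ hM, one_mul]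

/-- `M⁻¹` and `M'⁻¹` are transposes of each other for the bilinear pairing of coefficients against the
functionals `ell`, since `G (1 + QG)⁻¹` has transpose `G (1 + QᵀG)⁻¹`. -/
lemma pairing_expo
    (hH : ∀ j g, H (e j) g = ell j g • e j)
    (hl : ∀ i j, ell i (e j) = 1 / (w i + w j))
    (ca : T → ι → κ → ℂ) (cb : T → κ → ι → ℂ)
    (hM : IsUnit (prodOp H (expo e ca) (expo e cb)))
    (hM' : IsUnit (prodOp H (tr (expo e cb)) (tr (expo e ca)))) (y z : T × ι → ℂ) :
    y ⬝ᵥ anal ell ι (Ring.inverse (prodOp H (expo e ca) (expo e cb)) (synth e ι z)) =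
    z ⬝ᵥ anal ell ι (Ring.inverse (prodOp H (tr (expo e cb)) (tr (expo e ca)))
      (synth e ι y)) := by
  classical
  obtain ⟨L, R, hL, hL', hR, hR1, hR'⟩ := exists_LR H e ell w hH hl ca cb hM
  have h1 := inverse_synth H e ell w hH hl ca cb hM L hL' z
  have h2 : Ring.inverse (prodOp H (tr (expo e cb)) (tr (expo e ca))) (synth e ι y) = _ :=
    inverse_synth H e ell w hH hl _ _ hM' Rᵀ hR' y
  rw [h1, h2, anal_synth e ell w hl, anal_synth e ell w hl]
  have h3 : gramMat w ι * L = R * gramMat w ι := by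
    calc gramMat w ι * L = R * (1 + gramMat w ι * prodCoeff w ca cb) * gramMat w ι * L := by
          rw [hR1, one_mul]
      _ = R * gramMat w ι * ((1 + prodCoeff w ca cb * gramMat w ι) * L) := by noncomm_ring
      _ = _ := by rw [hL', mul_one]
  rw [Matrix.mulVec_mulVec, Matrix.mulVec_mulVec, h3, dotProduct_comm z, Matrix.dotProduct_mulVec,
    ← Matrix.mulVec_transpose, Matrix.transpose_mul, gramMat_transpose]

end Finite

lemma synth_single {T : Type*} [Fintype T] [DecidableEq T] [DecidableEq ι] (e : T → E) (t : T)
    (i : ι) : synth e ι (Pi.single (t, i) 1) = Pi.single i (e t) := by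
  ext j
  simp only [synth, LinearMap.coe_mk, AddHom.coe_mk, Pi.single_apply, Prod.mk.injEq]
  by_cases h : j = i
  · simp [h]
  · simp [h]

lemma anal_dot_single {T : Type*} [Fintype T] [DecidableEq T] [DecidableEq ι]
    (ell : T → E →L[ℂ] ℂ) (t : T) (i : ι) (f : ι → E) :
    (Pi.single (t, i) 1 : T × ι → ℂ) ⬝ᵥ anal ell ι f = ell t (f i) := by
  simp [anal]

/-! ### Passage to general kernels -/

section Density

variable (e : ℕ → E) (ell : ℕ → E →L[ℂ] ℂ)

/-- Pairs of matrix kernels all of whose entries are finite combinations of the `e n`. -/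
def expoPairs (ι κ : Type*) : Set ((ι → κ → E) × (κ → ι → E)) :=
  {x | (∀ i l, x.1 i l ∈ Submodule.span ℂ (range e)) ∧
    ∀ l i, x.2 l i ∈ Submodule.span ℂ (range e)}

lemma dense_expoPairs (hd : Dense (Submodule.span ℂ (range e) : Set E)) :
    Dense (expoPairs e ι κ) := by
  have h : expoPairs e ι κ =
      (Set.pi univ fun _ : ι => Set.pi univ fun _ : κ => (Submodule.span ℂ (range e) : Set E)) ×ˢ
      (Set.pi univ fun _ : κ => Set.pi univ fun _ : ι => (Submodule.span ℂ (range e) : Set E)) := by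
    ext x
    simp [expoPairs, Set.mem_pi]
  rw [h]
  exact (dense_pi _ fun _ _ => dense_pi _ fun _ _ => hd).prod
    (dense_pi _ fun _ _ => dense_pi _ fun _ _ => hd)

/-- The finite index set may be enlarged to contain any prescribed `s₁`. -/
lemma exists_expo (s₁ : Finset ℕ) (x : (ι → κ → E) × (κ → ι → E)) (hx : x ∈ expoPairs e ι κ) :
    ∃ s : Finset ℕ, s₁ ⊆ s ∧ ∃ (ca : s → ι → κ → ℂ) (cb : s → κ → ι → ℂ),
      x.1 = expo (fun t : s => e t) ca ∧ x.2 = expo (fun t : s => e t) cb := by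
  obtain ⟨h1, h2⟩ := hx
  simp only [Finsupp.mem_span_range_iff_exists_finsupp] at h1 h2
  choose c1 h1 using h1
  choose c2 h2 using h2
  let s : Finset ℕ := s₁ ∪ ((Finset.univ.biUnion fun i => Finset.univ.biUnion fun l =>
    (c1 i l).support) ∪ (Finset.univ.biUnion fun l => Finset.univ.biUnion fun i =>
    (c2 l i).support))
  have hs1 : ∀ i l, (c1 i l).support ⊆ s := fun i l =>
    ((Finset.subset_biUnion_of_mem (fun l => (c1 i l).support) (Finset.mem_univ l)).trans
      (Finset.subset_biUnion_of_mem (fun i => Finset.univ.biUnion fun l => (c1 i l).support)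
        (Finset.mem_univ i))).trans
      (Finset.subset_union_left.trans Finset.subset_union_right)
  have hs2 : ∀ l i, (c2 l i).support ⊆ s := fun l i =>
    ((Finset.subset_biUnion_of_mem (fun i => (c2 l i).support) (Finset.mem_univ i)).trans
      (Finset.subset_biUnion_of_mem (fun l => Finset.univ.biUnion fun i => (c2 l i).support)
        (Finset.mem_univ l))).trans
      (Finset.subset_union_right.trans Finset.subset_union_right)
  refine ⟨s, Finset.subset_union_left, fun t i l => c1 i l t, fun t l i => c2 l i t, ?_, ?_⟩
  · ext i l
    rw [← h1, Finsupp.sum_of_support_subset _ (hs1 i l) _ (by simp)]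
    exact (Finset.sum_coe_sort s fun t => c1 i l t • e t).symm
  · ext l i
    rw [← h2, Finsupp.sum_of_support_subset _ (hs2 l i) _ (by simp)]
    exact (Finset.sum_coe_sort s fun t => c2 l i t • e t).symm

lemma continuous_colAct {σ : Type*} : Continuous
    fun x : ((κ → E) →L[ℂ] (ι → E)) × (κ → σ → E) => colAct x.1 x.2 := by
  refine continuous_pi fun i => continuous_pi fun s => ?_
  have : Continuous fun x : ((κ → E) →L[ℂ] (ι → E)) × (κ → σ → E) => x.1 (fun l => x.2 l s) := by
    fun_prop
  exact (continuous_apply i).comp this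

lemma continuous_tr {σ τ : Type*} : Continuous fun k : σ → τ → E => tr k :=
  continuous_pi fun j => continuous_pi fun i => (continuous_apply j).comp (continuous_apply i)

lemma continuous_prodOp' :
    Continuous fun x : (ι → κ → E) × (κ → ι → E) => prodOp H (tr x.2) (tr x.1) := by
  have h1 : Continuous fun x : (ι → κ → E) × (κ → ι → E) => Hm H (tr x.2) :=
    (continuous_Hm H).comp (continuous_tr.comp continuous_snd)
  have h2 : Continuous fun x : (ι → κ → E) × (κ → ι → E) => Hm H (tr x.1) :=
    (continuous_Hm H).comp (continuous_tr.comp continuous_fst)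
  exact continuous_const.add (h1.clm_comp h2)

variable [CompleteSpace E]

lemma continuousAt_inverse {α : Type*} [TopologicalSpace α]
    {F : α → (ι → E) →L[ℂ] (ι → E)} (hF : Continuous F) {x : α} (hx : IsUnit (F x)) :
    ContinuousAt (fun y => Ring.inverse (F y)) x := by
  obtain ⟨u, hu⟩ := hx
  have h := NormedRing.inverse_continuousAt u
  rw [hu] at h
  exact ContinuousAt.comp (f := F) (g := Ring.inverse) h hF.continuousAt

lemma continuousAt_bezout (x : (ι → κ → E) × (κ → ι → E)) (h : IsUnit (prodOp H x.1 x.2))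
    (h' : IsUnit (prodOp H (tr x.2) (tr x.1))) :
    ContinuousAt (fun x : (ι → κ → E) × (κ → ι → E) => bezout H x.1 x.2) x := by
  have i1 := continuousAt_inverse (continuous_prodOp H) h
  have i2 := continuousAt_inverse (continuous_prodOp' H) h'
  have cHa : ContinuousAt (fun x : (ι → κ → E) × (κ → ι → E) => Hm H x.1) x :=
    ((continuous_Hm H).comp continuous_fst).continuousAt
  have cHb : ContinuousAt (fun x : (ι → κ → E) × (κ → ι → E) => Hm H (tr x.2)) x :=
    ((continuous_Hm H).comp (continuous_tr.comp continuous_snd)).continuousAt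
  have ca : ContinuousAt (fun x : (ι → κ → E) × (κ → ι → E) => x.1) x := continuousAt_fst
  have cb : ContinuousAt (fun x : (ι → κ → E) × (κ → ι → E) => x.2) x := continuousAt_snd
  have ca' : ContinuousAt (fun x : (ι → κ → E) × (κ → ι → E) => tr x.1) x :=
    (continuous_tr.comp continuous_fst).continuousAt
  have cb' : ContinuousAt (fun x : (ι → κ → E) × (κ → ι → E) => tr x.2) x :=
    (continuous_tr.comp continuous_snd).continuousAt
  have k1 := (continuous_Hm H).continuousAt.comp
    (continuous_colAct.continuousAt.comp (i1.prodMk ca))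
  have k2 := (continuous_Hm H).continuousAt.comp (continuous_tr.continuousAt.comp
    (continuous_colAct.continuousAt.comp (i2.prodMk cb')))
  have k3 := (continuous_Hm H).continuousAt.comp (continuous_colAct.continuousAt.comp
    (i1.prodMk (continuous_colAct.continuousAt.comp (cHa.prodMk cb))))
  have k4 := (continuous_Hm H).continuousAt.comp (continuous_tr.continuousAt.comp
    (continuous_colAct.continuousAt.comp
      (i2.prodMk (continuous_colAct.continuousAt.comp (cHb.prodMk ca')))))
  exact (continuousAt_const.sub (k1.clm_comp k2)).sub (k3.clm_comp k4)

/-- Density principle: an identity that holds for exponential kernels with both operators invertible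
holds at `x`, because invertibility is an open condition. -/
lemma eq_of_expoPairs {Y : Type*} [TopologicalSpace Y] [T2Space Y]
    (hd : Dense (Submodule.span ℂ (range e) : Set E)) (x : (ι → κ → E) × (κ → ι → E))
    (h : IsUnit (prodOp H x.1 x.2)) (h' : IsUnit (prodOp H (tr x.2) (tr x.1)))
    (F G : (ι → κ → E) × (κ → ι → E) → Y) (hF : ContinuousAt F x) (hG : ContinuousAt G x)
    (hFG : ∀ z ∈ expoPairs e ι κ, IsUnit (prodOp H z.1 z.2) →
      IsUnit (prodOp H (tr z.2) (tr z.1)) → F z = G z) : F x = G x := by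
  have hne : (nhdsWithin x (expoPairs e ι κ)).NeBot :=
    mem_closure_iff_nhdsWithin_neBot.1 (dense_expoPairs e hd x)
  refine tendsto_nhds_unique_of_eventuallyEq (hF.mono_left nhdsWithin_le_nhds)
    (hG.mono_left (nhdsWithin_le_nhds (s := expoPairs e ι κ))) ?_
  have o1 : ∀ᶠ z in nhdsWithin x (expoPairs e ι κ), IsUnit (prodOp H z.1 z.2) :=
    nhdsWithin_le_nhds ((continuous_prodOp H).continuousAt (Units.isOpen.mem_nhds h))
  have o2 : ∀ᶠ z in nhdsWithin x (expoPairs e ι κ), IsUnit (prodOp H (tr z.2) (tr z.1)) :=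
    nhdsWithin_le_nhds ((continuous_prodOp' H).continuousAt (Units.isOpen.mem_nhds h'))
  filter_upwards [o1, o2, self_mem_nhdsWithin] with z h1 h2 h3 using hFG z h3 h1 h2

lemma weight_ne (i j : ℕ) : ((i : ℂ) + 1) + ((j : ℂ) + 1) ≠ 0 := by
  have : ((i + 1 + (j + 1) : ℕ) : ℂ) ≠ 0 := Nat.cast_ne_zero.2 (by omega)
  push_cast at this
  exact this

/-- The inversion formula for arbitrary kernels. -/
theorem inverse_eq_bezout (hH : ∀ j g, H (e j) g = ell j g • e j)
    (hl : ∀ i j : ℕ, ell i (e j) = 1 / (((i : ℂ) + 1) + ((j : ℂ) + 1)))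
    (hd : Dense (Submodule.span ℂ (range e) : Set E)) (a : ι → κ → E) (b : κ → ι → E)
    (h : IsUnit (prodOp H a b)) (h' : IsUnit (prodOp H (tr b) (tr a))) :
    Ring.inverse (prodOp H a b) = bezout H a b := by
  refine eq_of_expoPairs H e hd (a, b) h h' (fun x => Ring.inverse (prodOp H x.1 x.2))
    (fun x => bezout H x.1 x.2) (continuousAt_inverse (continuous_prodOp H) h)
    (continuousAt_bezout H _ h h') ?_
  rintro ⟨a, b⟩ hz h1 h2
  obtain ⟨s, -, ca, cb, rfl, rfl⟩ := exists_expo e ∅ _ hz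
  exact inverse_eq_bezout_expo H (fun t : s => e t) (fun t : s => ell t)
    (fun t : s => ((t : ℕ) : ℂ) + 1) (fun j g => hH j g) (fun i j => hl i j)
    (fun i j => weight_ne i j) ca cb h1 h2

lemma pairing (hH : ∀ j g, H (e j) g = ell j g • e j)
    (hl : ∀ i j : ℕ, ell i (e j) = 1 / (((i : ℂ) + 1) + ((j : ℂ) + 1)))
    (hd : Dense (Submodule.span ℂ (range e) : Set E)) [DecidableEq ι] (a : ι → κ → E)
    (b : κ → ι → E) (h : IsUnit (prodOp H a b)) (h' : IsUnit (prodOp H (tr b) (tr a)))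
    (m n : ℕ) (i j : ι) :
    ell m (Ring.inverse (prodOp H a b) (Pi.single j (e n)) i) =
      ell n (Ring.inverse (prodOp H (tr b) (tr a)) (Pi.single i (e m)) j) := by
  have hc : ∀ (m : ℕ) (i : ι) (g : ι → E), Continuous
      fun X : (ι → E) →L[ℂ] (ι → E) => ell m (X g i) := fun m i g =>
    (ell m).continuous.comp ((continuous_apply i).comp (by fun_prop))
  refine eq_of_expoPairs H e hd (a, b) h h'
    (fun x => ell m (Ring.inverse (prodOp H x.1 x.2) (Pi.single j (e n)) i))
    (fun x => ell n (Ring.inverse (prodOp H (tr x.2) (tr x.1)) (Pi.single i (e m)) j))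
    (ContinuousAt.comp (g := fun X : (ι → E) →L[ℂ] (ι → E) => ell m (X (Pi.single j (e n)) i))
      (hc m i _).continuousAt (continuousAt_inverse (continuous_prodOp H) h))
    (ContinuousAt.comp (g := fun X : (ι → E) →L[ℂ] (ι → E) => ell n (X (Pi.single i (e m)) j))
      (hc n j _).continuousAt (continuousAt_inverse (continuous_prodOp' H) h')) ?_
  rintro ⟨a, b⟩ hz h1 h2
  obtain ⟨s, hs, ca, cb, rfl, rfl⟩ := exists_expo e {m, n} _ hz
  have hm : m ∈ s := hs (by simp)
  have hn : n ∈ s := hs (by simp)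
  have key := pairing_expo H (fun t : s => e t) (fun t : s => ell t)
    (fun t : s => ((t : ℕ) : ℂ) + 1) (fun j g => hH j g) (fun i j => hl i j) ca cb h1 h2
    (Pi.single (⟨m, hm⟩, i) 1) (Pi.single (⟨n, hn⟩, j) 1)
  rw [synth_single, synth_single, anal_dot_single, anal_dot_single] at key
  exact key

/-- Invertibility of `1 + H_a H_b` passes to `1 + H_{bᵀ} H_{aᵀ}`: after subtracting finite-rank
operators with exponential kernels both become small perturbations of the identity `G`, `G'`, and
the question reduces to the determinants of `1 + WQ` and `1 + WᵀQᵀ`. -/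
theorem isUnit_transpose (hH : ∀ j g, H (e j) g = ell j g • e j)
    (hl : ∀ i j : ℕ, ell i (e j) = 1 / (((i : ℂ) + 1) + ((j : ℂ) + 1)))
    (hd : Dense (Submodule.span ℂ (range e) : Set E)) (a : ι → κ → E) (b : κ → ι → E)
    (h : IsUnit (prodOp H a b)) : IsUnit (prodOp H (tr b) (tr a)) := by
  classical
  -- `M - H_{z.1} H_{z.2}` is again of the form `1 + H H`, with the kernels `P z`, so `pairing` applies
  -- to it.
  let P : (ι → κ → E) × (κ → ι → E) → (ι → κ ⊕ κ → E) × (κ ⊕ κ → ι → E) := fun z =>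
    (fun i => Sum.elim (a i) (z.1 i), Sum.elim b (-z.2))
  have hP : Continuous P := by
    refine Continuous.prodMk ?_ ?_
    · refine continuous_pi fun i => continuous_pi fun l => ?_
      rcases l with l | l <;> simp only [Sum.elim_inl, Sum.elim_inr] <;> fun_prop
    · refine continuous_pi fun l => ?_
      rcases l with l | l <;> simp only [Sum.elim_inl, Sum.elim_inr] <;> fun_prop
  have e1 : ∀ z, prodOp H (P z).1 (P z).2 =
      prodOp H a b - (Hm H z.1).comp (Hm H z.2) := by
    intro z
    ext f i
    simp [prodOp, P, Hm_apply, Fintype.sum_sum_type, ← sub_eq_add_neg, add_sub_assoc]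
  have e2 : ∀ z, prodOp H (tr (P z).2) (tr (P z).1) =
      prodOp H (tr b) (tr a) - (Hm H (tr z.2)).comp (Hm H (tr z.1)) := by
    intro z
    ext f i
    simp [prodOp, P, Hm_apply, tr, Fintype.sum_sum_type, ← sub_eq_add_neg, add_sub_assoc]
  have u1 : IsUnit (prodOp H (P (a, b)).1 (P (a, b)).2) := by
    rw [e1]; simp [prodOp]
  have u2 : IsUnit (prodOp H (tr (P (a, b)).2) (tr (P (a, b)).1)) := by
    rw [e2]; simp [prodOp]
  have o1 := ((continuous_prodOp H).comp hP).continuousAt (Units.isOpen.mem_nhds u1)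
  have o2 := ((continuous_prodOp' H).comp hP).continuousAt (Units.isOpen.mem_nhds u2)
  obtain ⟨z, ⟨g1, g2⟩, hz⟩ := mem_closure_iff_nhds.1 (dense_expoPairs e hd (a, b)) _
    (Filter.inter_mem o1 o2)
  simp only [mem_preimage, mem_ofPred_eq, Function.comp] at g1 g2
  have pair := pairing H e ell hH hl hd _ _ g1 g2
  rw [e1] at g1 pair
  rw [e2] at g2 pair
  obtain ⟨s, -, ca, cb, hza, hzb⟩ := exists_expo e ∅ _ hz
  set es : s → E := fun t => e t with hes
  set ls : s → E →L[ℂ] ℂ := fun t => ell t with hls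
  set ws : s → ℂ := fun t => ((t : ℕ) : ℂ) + 1 with hws
  have hH' : ∀ j g, H (es j) g = ls j g • es j := fun j g => hH j g
  have hl' : ∀ i j, ls i (es j) = 1 / (ws i + ws j) := fun i j => hl i j
  set Q := prodCoeff ws ca cb with hQ
  have F1 : ∀ f, (Hm H z.1).comp (Hm H z.2) f = synth es ι (Q *ᵥ anal ls ι f) := by
    intro f
    rw [hza, hzb]
    exact Hm_Hm_expo H es ls ws hH' hl' ca cb f
  have F2 : ∀ f, (Hm H (tr z.2)).comp (Hm H (tr z.1)) f = synth es ι (Qᵀ *ᵥ anal ls ι f) := by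
    intro f
    rw [hza, hzb, hQ, prodCoeff_transpose]
    exact Hm_Hm_expo H es ls ws hH' hl' _ _ f
  set M := prodOp H a b
  set M' := prodOp H (tr b) (tr a)
  set G := M - (Hm H z.1).comp (Hm H z.2)
  set G' := M' - (Hm H (tr z.2)).comp (Hm H (tr z.1))
  -- `M = G + synth ∘ Q ∘ anal`, so `M` is governed by `1 + WQ` where
  -- `W = anal ∘ G⁻¹ ∘ synth`.
  have M1 : ∀ f, M f = G f + synth es ι (Q *ᵥ anal ls ι f) := by
    intro f; rw [← F1]; simp [G]
  have M2 : ∀ f, M' f = G' f + synth es ι (Qᵀ *ᵥ anal ls ι f) := by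
    intro f; rw [← F2]; simp [G']
  let W := LinearMap.toMatrix' ((anal ls ι) ∘ₗ (Ring.inverse G).toLinearMap ∘ₗ synth es ι)
  let W' := LinearMap.toMatrix' ((anal ls ι) ∘ₗ (Ring.inverse G').toLinearMap ∘ₗ synth es ι)
  have hW : ∀ v, anal ls ι (Ring.inverse G (synth es ι v)) = W *ᵥ v := fun v => by
    simp [W, LinearMap.toMatrix'_mulVec]
  have hW' : ∀ v, anal ls ι (Ring.inverse G' (synth es ι v)) = W' *ᵥ v := fun v => by
    simp [W', LinearMap.toMatrix'_mulVec]
  have hWW : W' = Wᵀ := by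
    ext ⟨t, i⟩ ⟨u, j⟩
    have k1 := congrFun (hW' (Pi.single (u, j) 1)) (t, i)
    have k2 := congrFun (hW (Pi.single (t, i) 1)) (u, j)
    rw [synth_single, Matrix.mulVec_single_one] at k1 k2
    have := pair u t j i
    simp only [Matrix.transpose_apply]
    simp only [Matrix.col_apply] at k1 k2
    rw [← k1, ← k2]
    exact this.symm
  have iG : ∀ f, Ring.inverse G (G f) = f := fun f =>
    congrArg (fun X : (ι → E) →L[ℂ] (ι → E) => X f) (Ring.inverse_mul_cancel _ g1)
  have Gi : ∀ f, G (Ring.inverse G f) = f := fun f =>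
    congrArg (fun X : (ι → E) →L[ℂ] (ι → E) => X f) (Ring.mul_inverse_cancel _ g1)
  have iG' : ∀ f, Ring.inverse G' (G' f) = f := fun f =>
    congrArg (fun X : (ι → E) →L[ℂ] (ι → E) => X f) (Ring.inverse_mul_cancel _ g2)
  have Gi' : ∀ f, G' (Ring.inverse G' f) = f := fun f =>
    congrArg (fun X : (ι → E) →L[ℂ] (ι → E) => X f) (Ring.mul_inverse_cancel _ g2)
  have hMi : Function.Injective M := (ContinuousLinearMap.isUnit_iff_bijective.1 h).1
  have hU : IsUnit (1 + W * Q) := by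
    rw [← Matrix.mulVec_injective_iff_isUnit]
    refine (injective_iff_map_eq_zero (Matrix.mulVecLin _)).2 fun v hv => ?_
    have hv' : v + W *ᵥ (Q *ᵥ v) = 0 := by
      simpa [Matrix.add_mulVec, Matrix.mulVec_mulVec] using hv
    have h0 : Ring.inverse G (synth es ι (Q *ᵥ v)) = 0 := by
      apply hMi
      rw [M1, Gi, hW, ← map_add, ← Matrix.mulVec_add, hv']
      simp
    have h1 := hW (Q *ᵥ v)
    rw [h0, map_zero] at h1
    rwa [← h1, add_zero] at hv'
  have hU' : IsUnit (1 + W' * Qᵀ) := by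
    rw [Matrix.isUnit_iff_isUnit_det] at hU ⊢
    rwa [← Matrix.det_transpose, Matrix.transpose_add, Matrix.transpose_mul, Matrix.transpose_one,
      Matrix.transpose_transpose, hWW, Matrix.transpose_transpose, Matrix.det_one_add_mul_comm]
  rw [ContinuousLinearMap.isUnit_iff_bijective]
  constructor
  · refine (injective_iff_map_eq_zero M').2 fun f hf => ?_
    rw [M2] at hf
    have h1 : f + Ring.inverse G' (synth es ι (Qᵀ *ᵥ anal ls ι f)) = 0 := by
      have := congrArg (fun y => Ring.inverse G' y) hf
      simp only [map_add, iG', map_zero] at this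
      exact this
    have h2 := congrArg (anal ls ι) h1
    rw [map_add, hW', map_zero] at h2
    have h3 : anal ls ι f = 0 := by
      apply Matrix.mulVec_injective_iff_isUnit.2 hU'
      simpa [Matrix.add_mulVec, Matrix.mulVec_mulVec] using h2
    rw [h3] at h1
    simpa using h1
  · intro g
    obtain ⟨v, hv⟩ := Matrix.mulVec_surjective_iff_isUnit.2 hU' (anal ls ι (Ring.inverse G' g))
    refine ⟨Ring.inverse G' (g - synth es ι (Qᵀ *ᵥ v)), ?_⟩
    have h1 : anal ls ι (Ring.inverse G' (g - synth es ι (Qᵀ *ᵥ v))) = v := by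
      rw [map_sub, map_sub, hW', ← hv]
      simp [Matrix.add_mulVec, Matrix.mulVec_mulVec]
    rw [M2, h1, Gi']
    simp

end Density
end Abstract

/-! ### Scalar Hankel operators on `L¹` -/

/-- Scalar `L¹(ℝ₊)`. -/
abbrev L1S := Lp ℂ 1 μP

lemma integrable_coe {F : Type*} [NormedAddCommGroup F] (f : Lp F 1 μP) : Integrable f μP :=
  L1.integrable_coeFn f

lemma ae_nonneg : ∀ᵐ t ∂μP, 0 ≤ t := ae_restrict_mem measurableSet_Ici

lemma shift_integrable {F : Type*} [NormedAddCommGroup F] {h : ℝ → F} (hh : Integrable h μP)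
    {y : ℝ} (hy : 0 ≤ y) : Integrable (fun x => h (x + y)) μP ∧
      ∫ x, ‖h (x + y)‖ ∂μP ≤ ∫ x, ‖h x‖ ∂μP := by
  have hp : (fun x => x + y) ⁻¹' Ici y = Ici (0 : ℝ) := by ext x; simp
  have mp := measurePreserving_add_right (volume : Measure ℝ) y
  have me := measurableEmbedding_addRight y
  have hs : Ici y ⊆ Ici (0 : ℝ) := Ici_subset_Ici.2 hy
  constructor
  · have := (mp.integrableOn_comp_preimage me (f := h) (s := Ici y)).2
      (IntegrableOn.mono_set hh hs)
    rw [hp] at this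
    exact this
  · have := mp.setIntegral_preimage_emb me (fun x => ‖h x‖) (Ici y)
    rw [hp] at this
    rw [μP, this]
    exact setIntegral_mono_set (Integrable.norm hh) (Filter.Eventually.of_forall fun x => norm_nonneg _)
      (Filter.Eventually.of_forall hs)

lemma norm_eq_integral {F : Type*} [NormedAddCommGroup F] (f : Lp F 1 μP) :
    ‖f‖ = ∫ t, ‖f t‖ ∂μP := L1.norm_eq_integral_norm f

/-- Absolute convergence of the double integral behind `H_h f`, with `‖H_h f‖ ≤ ‖h‖ ‖f‖`. -/
lemma hankel_prod (h f : L1S) :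
    Integrable (fun z : ℝ × ℝ => h (z.1 + z.2) * f z.2) (μP.prod μP) ∧
    ∫ z, ‖h (z.1 + z.2) * f z.2‖ ∂(μP.prod μP) ≤ ‖h‖ * ‖f‖ := by
  have : SFinite μP := by unfold μP; infer_instance
  have hm : AEStronglyMeasurable (fun z : ℝ × ℝ => h (z.1 + z.2) * f z.2) (μP.prod μP) := by
    refine StronglyMeasurable.aestronglyMeasurable ?_
    exact ((Lp.stronglyMeasurable h).comp_measurable (measurable_fst.add measurable_snd)).mul
      ((Lp.stronglyMeasurable f).comp_measurable measurable_snd)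
  have hbd : ∀ᵐ y ∂μP, ∫ x, ‖h (x + y) * f y‖ ∂μP ≤ ‖h‖ * ‖f y‖ := by
    filter_upwards [ae_nonneg] with y hy
    simp only [norm_mul]
    rw [integral_mul_const, norm_eq_integral h]
    exact mul_le_mul_of_nonneg_right (shift_integrable (integrable_coe h) hy).2 (norm_nonneg _)
  have hi : Integrable (fun z : ℝ × ℝ => h (z.1 + z.2) * f z.2) (μP.prod μP) := by
    rw [integrable_prod_iff' hm]
    constructor
    · filter_upwards [ae_nonneg] with y hy
      exact (shift_integrable (integrable_coe h) hy).1.mul_const _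
    · refine Integrable.mono' ((integrable_coe f).norm.const_mul ‖h‖) ?_ ?_
      · exact hm.norm.prod_swap.integral_prod_right'
      · filter_upwards [hbd] with y hy
        rwa [Real.norm_of_nonneg (integral_nonneg fun _ => norm_nonneg _)]
  refine ⟨hi, ?_⟩
  rw [integral_prod_symm _ hi.norm]
  calc ∫ y, ∫ x, ‖h (x + y) * f y‖ ∂μP ∂μP ≤ ∫ y, ‖h‖ * ‖f y‖ ∂μP :=
        integral_mono_ae hi.norm.integral_prod_right ((integrable_coe f).norm.const_mul _) hbd
    _ = ‖h‖ * ‖f‖ := by rw [integral_const_mul, ← norm_eq_integral]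

instance : SFinite μP := by unfold μP; infer_instance

lemma hankel_ae_integrable (h f : L1S) :
    ∀ᵐ t ∂μP, Integrable (fun s => h (t + s) * f s) μP :=
  (hankel_prod h f).1.prod_right_ae

lemma hankel_integrable (h f : L1S) : Integrable (fun t => ∫ s, h (t + s) * f s ∂μP) μP :=
  (hankel_prod h f).1.integral_prod_left

/-- Translation by `t ≥ 0` preserves null sets, so changing `h` on a null set leaves
`s ↦ h (t + s)` unchanged almost everywhere. -/
lemma ae_shift {P : ℝ → Prop} (hP : ∀ᵐ x ∂μP, P x) {t : ℝ} (ht : 0 ≤ t) :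
    ∀ᵐ s ∂μP, P (t + s) := by
  rw [μP, ae_restrict_iff' measurableSet_Ici] at *
  have := (measurePreserving_add_left (volume : Measure ℝ) t).quasiMeasurePreserving.ae hP
  filter_upwards [this] with s hs hs'
  exact hs (add_nonneg ht hs')

lemma hankel_congr {h h' f f' : ℝ → ℂ} (hh : h =ᵐ[μP] h') (hf : f =ᵐ[μP] f') :
    ∀ᵐ t ∂μP, (fun s => h (t + s) * f s) =ᵐ[μP] fun s => h' (t + s) * f' s := by
  filter_upwards [ae_nonneg] with t ht
  filter_upwards [ae_shift hh ht, hf] with s h1 h2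
  rw [h1, h2]

/-- The scalar Hankel operator `(hankelS h f)(t) = ∫ h (t + s) f s ds`, as a bounded bilinear map of
the kernel `h` and the function `f`. -/
def hankelS : L1S →L[ℂ] L1S →L[ℂ] L1S :=
  LinearMap.mkContinuous₂
    (LinearMap.mk₂ ℂ (fun h f => (hankel_integrable h f).toL1 _)
      (by
        intro h h' f
        rw [← Integrable.toL1_add]
        refine (Integrable.toL1_eq_toL1_iff _ _ _ _).2 ?_
        filter_upwards [hankel_congr (Lp.coeFn_add h h') (Filter.EventuallyEq.refl _ f),
          hankel_ae_integrable h f, hankel_ae_integrable h' f] with t ht i1 i2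
        rw [integral_congr_ae ht, Pi.add_apply, ← integral_add i1 i2]
        simp [add_mul])
      (by
        intro c h f
        rw [← Integrable.toL1_smul]
        refine (Integrable.toL1_eq_toL1_iff _ _ _ _).2 ?_
        filter_upwards [hankel_congr (Lp.coeFn_smul c h) (Filter.EventuallyEq.refl _ f)] with t ht
        rw [integral_congr_ae ht]
        simp [mul_assoc, integral_const_mul])
      (by
        intro h f f'
        rw [← Integrable.toL1_add]
        refine (Integrable.toL1_eq_toL1_iff _ _ _ _).2 ?_
        filter_upwards [hankel_congr (Filter.EventuallyEq.refl _ h) (Lp.coeFn_add f f'),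
          hankel_ae_integrable h f, hankel_ae_integrable h f'] with t ht i1 i2
        rw [integral_congr_ae ht, Pi.add_apply, ← integral_add i1 i2]
        simp [mul_add])
      (by
        intro c h f
        rw [← Integrable.toL1_smul]
        refine (Integrable.toL1_eq_toL1_iff _ _ _ _).2 ?_
        filter_upwards [hankel_congr (Filter.EventuallyEq.refl _ h) (Lp.coeFn_smul c f)] with t ht
        rw [integral_congr_ae ht]
        simp [mul_left_comm, integral_const_mul]))
    1 (by
      intro h f
      simp only [LinearMap.mk₂_apply]
      rw [one_mul, Integrable.norm_toL1_eq_lintegral_norm, ← integral_eq_lintegral_of_nonneg_ae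
        (Filter.Eventually.of_forall fun _ => norm_nonneg _)
        (hankel_integrable h f).norm.aestronglyMeasurable]
      refine le_trans ?_ (hankel_prod h f).2
      rw [integral_prod _ (hankel_prod h f).1.norm]
      exact integral_mono (hankel_integrable h f).norm (hankel_prod h f).1.norm.integral_prod_left
        fun t => norm_integral_le_integral_norm _)

lemma hankelS_ae (h f : L1S) : hankelS h f =ᵐ[μP] fun t => ∫ s, h (t + s) * f s ∂μP :=
  Integrable.coeFn_toL1 (hankel_integrable h f)

/-! ### Exponential kernels -/

/-- The exponential `t ↦ exp (-(n + 1) t)`. -/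
def expFun (n : ℕ) (t : ℝ) : ℂ := ((Real.exp (-((n : ℝ) + 1) * t) : ℝ) : ℂ)

lemma expFun_add (n : ℕ) (s t : ℝ) : expFun n (s + t) = expFun n s * expFun n t := by
  simp only [expFun]
  rw [← Complex.ofReal_mul, ← Real.exp_add]
  congr 2; ring

lemma integrable_real_exp (c : ℝ) (hc : 0 < c) : Integrable (fun t => Real.exp (-c * t)) μP := by
  rw [μP, ← IntegrableOn, integrableOn_Ici_iff_integrableOn_Ioi]
  exact integrableOn_exp_mul_Ioi (neg_lt_zero.2 hc) 0

lemma integral_real_exp (c : ℝ) (hc : 0 < c) : ∫ t, Real.exp (-c * t) ∂μP = 1 / c := by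
  rw [μP, integral_Ici_eq_integral_Ioi, integral_exp_mul_Ioi (neg_lt_zero.2 hc)]
  simp [neg_div_neg_eq]

lemma integrable_expFun (n : ℕ) : Integrable (expFun n) μP :=
  (integrable_real_exp _ (by positivity)).ofReal

lemma norm_expFun_le (n : ℕ) {t : ℝ} (ht : 0 ≤ t) : ‖expFun n t‖ ≤ 1 := by
  rw [expFun, Complex.norm_real, Real.norm_of_nonneg (Real.exp_pos _).le, Real.exp_le_one_iff]
  nlinarith [Nat.cast_nonneg (α := ℝ) n]

lemma continuous_expFun (n : ℕ) : Continuous (expFun n) := by unfold expFun; fun_prop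

/-- The class of `expFun n` in `L¹(ℝ₊)`. -/
def expL (n : ℕ) : L1S := (integrable_expFun n).toL1 _

lemma expL_ae (n : ℕ) : expL n =ᵐ[μP] expFun n := Integrable.coeFn_toL1 _

lemma integrable_expFun_mul (n : ℕ) (f : L1S) : Integrable (fun s => expFun n s * f s) μP := by
  refine (integrable_coe f).bdd_mul (c := 1) (continuous_expFun n).aestronglyMeasurable ?_
  filter_upwards [ae_nonneg] with t ht using norm_expFun_le n ht

/-- The Laplace transform at the point `n + 1`. -/
def lapl (n : ℕ) : L1S →L[ℂ] ℂ :=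
  LinearMap.mkContinuous
    { toFun := fun f => ∫ s, expFun n s * f s ∂μP
      map_add' := by
        intro f g
        rw [← integral_add (integrable_expFun_mul n f) (integrable_expFun_mul n g)]
        refine integral_congr_ae ?_
        filter_upwards [Lp.coeFn_add f g] with s hs
        rw [hs, Pi.add_apply, mul_add]
      map_smul' := by
        intro c f
        rw [RingHom.id_apply, smul_eq_mul, ← integral_const_mul]
        refine integral_congr_ae ?_
        filter_upwards [Lp.coeFn_smul c f] with s hs
        rw [hs, Pi.smul_apply, smul_eq_mul, mul_left_comm] }
    1 (by
      intro f
      rw [one_mul, norm_eq_integral]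
      refine (norm_integral_le_integral_norm _).trans ?_
      refine integral_mono_ae (integrable_expFun_mul n f).norm (integrable_coe f).norm ?_
      filter_upwards [ae_nonneg] with t ht
      rw [norm_mul]
      exact mul_le_of_le_one_left (norm_nonneg _) (norm_expFun_le n ht))

lemma lapl_apply (n : ℕ) (f : L1S) : lapl n f = ∫ s, expFun n s * f s ∂μP := rfl

/-- A Hankel operator with exponential kernel has rank one. -/
lemma hankelS_expL (n : ℕ) (g : L1S) : hankelS (expL n) g = lapl n g • expL n := by
  apply Lp.ext
  filter_upwards [hankelS_ae (expL n) g, Lp.coeFn_smul (lapl n g) (expL n), expL_ae n,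
    hankel_congr (expL_ae n) (Filter.EventuallyEq.refl _ g)] with t h1 h2 h3 h4
  rw [h1, h2, Pi.smul_apply, h3, integral_congr_ae h4, lapl_apply, smul_eq_mul, mul_comm,
    ← integral_const_mul]
  simp only [expFun_add, mul_assoc]

lemma lapl_expL (i j : ℕ) : lapl i (expL j) = 1 / (((i : ℂ) + 1) + ((j : ℂ) + 1)) := by
  have : ∫ s, expFun i s * expL j s ∂μP =
      ∫ s, ((Real.exp (-((i : ℝ) + 1 + (j + 1)) * s) : ℝ) : ℂ) ∂μP := by
    refine integral_congr_ae ?_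
    filter_upwards [expL_ae j] with s hs
    rw [hs, expFun, expFun, ← Complex.ofReal_mul, ← Real.exp_add]
    congr 2; ring
  rw [lapl_apply, this, integral_complex_ofReal, integral_real_exp _ (by positivity)]
  push_cast; rfl

/-! ### Density of the exponentials -/

lemma exp_poly_mem (p : Polynomial ℝ) : ∃ q ∈ Submodule.span ℂ (range expL),
    q =ᵐ[μP] fun t => ((Real.exp (-t) * p.eval (Real.exp (-t)) : ℝ) : ℂ) := by
  induction p using Polynomial.induction_on' with
  | add p q hp hq =>
    obtain ⟨a, ha, ha'⟩ := hp
    obtain ⟨b, hb, hb'⟩ := hq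
    refine ⟨a + b, add_mem ha hb, ?_⟩
    filter_upwards [Lp.coeFn_add a b, ha', hb'] with t h1 h2 h3
    rw [h1, Pi.add_apply, h2, h3, Polynomial.eval_add, mul_add, Complex.ofReal_add]
  | monomial n c =>
    refine ⟨(c : ℂ) • expL n, Submodule.smul_mem _ _ (Submodule.subset_span ⟨n, rfl⟩), ?_⟩
    filter_upwards [Lp.coeFn_smul (c : ℂ) (expL n), expL_ae n] with t h1 h2
    rw [h1, Pi.smul_apply, h2, Polynomial.eval_monomial, expFun, smul_eq_mul,
      ← Complex.ofReal_mul, ← Real.exp_nat_mul, mul_left_comm, ← Real.exp_add]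
    congr 3; ring

/-- Substituting `x = exp (-t)`, this is Weierstrass approximation of `g (-log x) / x` on `[0, 1]`; that
function vanishes near `0` because `g` vanishes beyond `R`. -/
lemma exists_exp_poly_near {g : ℝ → ℝ} (hg : Continuous g) (R : ℝ) (hR : ∀ t, R < t → g t = 0)
    {ε : ℝ} (hε : 0 < ε) : ∃ p : Polynomial ℝ, ∀ t, 0 ≤ t →
      |Real.exp (-t) * p.eval (Real.exp (-t)) - g t| ≤ ε * Real.exp (-t) := by
  have hc : ContinuousOn (fun x => g (-Real.log x) * x⁻¹) (Icc 0 1) := by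
    intro x hx
    rcases eq_or_lt_of_le hx.1 with h0 | h0
    · subst h0
      refine (continuousWithinAt_const (b := (0 : ℝ))).congr_of_eventuallyEq ?_ (by simp)
      have : Iio (Real.exp (-R)) ∈ nhdsWithin (0 : ℝ) (Icc 0 1) :=
        mem_nhdsWithin_of_mem_nhds (Iio_mem_nhds (Real.exp_pos _))
      filter_upwards [this, self_mem_nhdsWithin] with x hx hx'
      rcases eq_or_lt_of_le hx'.1 with h | h
      · simp [← h]
      · rw [hR, zero_mul]
        have := Real.log_lt_log h hx
        rw [Real.log_exp] at this
        linarith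
    · refine ContinuousAt.continuousWithinAt ?_
      exact (hg.continuousAt.comp (Real.continuousAt_log h0.ne').neg).mul
        (continuousAt_inv₀ h0.ne')
  obtain ⟨p, hp⟩ := exists_polynomial_near_of_continuousOn 0 1 _ hc ε hε
  refine ⟨p, fun t ht => ?_⟩
  have hpos := Real.exp_pos (-t)
  have h1 := (hp (Real.exp (-t)) ⟨hpos.le, Real.exp_le_one_iff.2 (by linarith)⟩).le
  rw [Real.log_exp, neg_neg] at h1
  have : Real.exp (-t) * p.eval (Real.exp (-t)) - g t =
      (p.eval (Real.exp (-t)) - g t * (Real.exp (-t))⁻¹) * Real.exp (-t) := by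
    field_simp
  rw [this, abs_mul, abs_of_pos hpos]
  exact mul_le_mul_of_nonneg_right h1 hpos.le

instance : IsLocallyFiniteMeasure μP := by unfold μP; infer_instance

lemma dense_span_expL : Dense (Submodule.span ℂ (range expL) : Set L1S) := by
  rw [Metric.dense_iff]
  intro f ε hε
  obtain ⟨g, hgc, hfg, hg, hgi⟩ :=
    (integrable_coe f).exists_hasCompactSupport_integral_sub_le (ε := ε / 4) (by positivity)
  obtain ⟨R, hR⟩ := hgc.isCompact.isBounded.subset_closedBall 0
  have hR' : ∀ t, R < t → g t = 0 := by
    intro t ht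
    by_contra h
    have := hR (subset_tsupport g h)
    rw [Metric.mem_closedBall, dist_zero_right, Real.norm_eq_abs] at this
    exact absurd (le_abs_self t) (by linarith)
  obtain ⟨p, hp⟩ := exists_exp_poly_near (g := fun t => (g t).re)
    (Complex.continuous_re.comp hg) R (fun t ht => by simp [hR' t ht]) (ε := ε / 4) (by positivity)
  obtain ⟨q, hq⟩ := exists_exp_poly_near (g := fun t => (g t).im)
    (Complex.continuous_im.comp hg) R (fun t ht => by simp [hR' t ht]) (ε := ε / 4) (by positivity)
  obtain ⟨a, ha, ha'⟩ := exp_poly_mem p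
  obtain ⟨b, hb, hb'⟩ := exp_poly_mem q
  refine ⟨a + Complex.I • b, ?_, add_mem ha (Submodule.smul_mem _ _ hb)⟩
  rw [Metric.mem_ball, dist_eq_norm, norm_eq_integral]
  have key : ∀ᵐ t ∂μP, ‖(a + Complex.I • b - f : L1S) t‖ ≤
      ε / 2 * Real.exp (-1 * t) + ‖f t - g t‖ := by
    filter_upwards [ae_nonneg, ha', hb', Lp.coeFn_add a (Complex.I • b),
      Lp.coeFn_smul Complex.I b, Lp.coeFn_sub (a + Complex.I • b) f] with t ht h1 h2 h3 h4 h5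
    rw [h5, Pi.sub_apply, h3, Pi.add_apply, h4, Pi.smul_apply, h1, h2, smul_eq_mul]
    set u := Real.exp (-t) * p.eval (Real.exp (-t))
    set v := Real.exp (-t) * q.eval (Real.exp (-t))
    have e1 : (u : ℂ) + Complex.I * v - f t =
        ((u - (g t).re : ℝ) : ℂ) + Complex.I * ((v - (g t).im : ℝ) : ℂ) - (f t - g t) := by
      have := Complex.re_add_im (g t)
      push_cast
      linear_combination this
    rw [e1]
    refine (norm_sub_le _ _).trans (add_le_add ((norm_add_le _ _).trans ?_) le_rfl)
    rw [norm_mul, Complex.norm_I, one_mul, Complex.norm_real, Complex.norm_real, neg_one_mul]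
    have := add_le_add (hp t ht) (hq t ht)
    simp only [Real.norm_eq_abs]
    linarith
  have i1 := (integrable_real_exp 1 one_pos).const_mul (ε / 2)
  have i2 := ((integrable_coe f).sub hgi).norm
  have := integral_mono_ae (integrable_coe (a + Complex.I • b - f)).norm (i1.add i2) key
  rw [Pi.add_def, integral_add i1 i2, integral_const_mul, integral_real_exp 1 one_pos] at this
  simp only [Pi.sub_apply] at this
  linarith

/-! ### Vector-valued Hankel operators -/

/-- The components of an element of `L¹(ℝ₊)ⁿ`. -/
def coordP (n : ℕ) : L1V n →L[ℂ] (Fin n → L1S) :=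
  ContinuousLinearMap.pi fun i =>
    ContinuousLinearMap.compLpL 1 μP (ContinuousLinearMap.proj (R := ℂ) (φ := fun _ : Fin n => ℂ) i)

/-- The element of `L¹(ℝ₊)ⁿ` with given components; inverse of `coordP`. -/
def coordS (n : ℕ) : (Fin n → L1S) →L[ℂ] L1V n :=
  ∑ i, (ContinuousLinearMap.compLpL 1 μP (ContinuousLinearMap.single ℂ (fun _ : Fin n => ℂ) i)).comp
    (ContinuousLinearMap.proj i)

lemma coordP_ae {n : ℕ} (f : L1V n) (i : Fin n) : coordP n f i =ᵐ[μP] fun t => f t i :=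
  ContinuousLinearMap.coeFn_compLpL _ f

lemma coeFn_finset_sum {F ι : Type*} [NormedAddCommGroup F] (s : Finset ι) (g : ι → Lp F 1 μP) :
    ⇑(∑ i ∈ s, g i) =ᵐ[μP] fun t => ∑ i ∈ s, g i t := by
  classical
  induction s using Finset.induction_on with
  | empty =>
    rw [Finset.sum_empty]
    filter_upwards [Lp.coeFn_zero F 1 μP] with t ht
    rw [ht, Finset.sum_empty, Pi.zero_apply]
  | insert a s ha ih =>
    rw [Finset.sum_insert ha]
    filter_upwards [Lp.coeFn_add (g a) (∑ i ∈ s, g i), ih] with t h1 h2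
    rw [h1, Pi.add_apply, h2, Finset.sum_insert ha]

lemma coordS_ae {n : ℕ} (x : Fin n → L1S) : coordS n x =ᵐ[μP] fun t i => x i t := by
  have h : coordS n x = ∑ i, (ContinuousLinearMap.compLpL 1 μP
      (ContinuousLinearMap.single ℂ (fun _ : Fin n => ℂ) i)) (x i) := by
    simp [coordS]
  rw [h]
  have h2 : ∀ᵐ t ∂μP, ∀ i, (ContinuousLinearMap.compLpL 1 μP
      (ContinuousLinearMap.single ℂ (fun _ : Fin n => ℂ) i)) (x i) t = Pi.single i (x i t) :=
    ae_all_iff.2 fun i => ContinuousLinearMap.coeFn_compLpL _ (x i)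
  filter_upwards [coeFn_finset_sum Finset.univ (fun i : Fin n => (ContinuousLinearMap.compLpL 1 μP
      (ContinuousLinearMap.single ℂ (fun _ : Fin n => ℂ) i)) (x i)), h2] with t h3 h4
  rw [h3]
  simp only [h4]
  exact Finset.univ_sum_single (fun i => x i t)

lemma coordP_coordS {n : ℕ} (x : Fin n → L1S) : coordP n (coordS n x) = x := by
  funext i
  apply Lp.ext
  filter_upwards [coordP_ae (coordS n x) i, coordS_ae x] with t h1 h2
  rw [h1, h2]

lemma coordS_coordP {n : ℕ} (f : L1V n) : coordS n (coordP n f) = f := by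
  apply Lp.ext
  have : ∀ᵐ t ∂μP, ∀ i, coordP n f i t = f t i := ae_all_iff.2 fun i => coordP_ae f i
  filter_upwards [coordS_ae (coordP n f), this] with t h1 h2
  rw [h1]
  funext i
  exact h2 i

/-- Transport of an operator between tuples of scalar `L¹` functions to one between the spaces
`L¹(ℝ₊)ⁿ` of vector-valued functions. -/
def toL1V {m n : ℕ} (X : (Fin m → L1S) →L[ℂ] (Fin n → L1S)) : L1V m →L[ℂ] L1V n :=
  (coordS n).comp (X.comp (coordP m))

/-- Inverse of `toL1V`. -/
def ofL1V {m n : ℕ} (X : L1V m →L[ℂ] L1V n) : (Fin m → L1S) →L[ℂ] (Fin n → L1S) :=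
  (coordP n).comp (X.comp (coordS m))

lemma toL1V_ofL1V {m n : ℕ} (X : L1V m →L[ℂ] L1V n) : toL1V (ofL1V X) = X := by
  ext1 f; simp [toL1V, ofL1V, coordS_coordP]

lemma ofL1V_toL1V {m n : ℕ} (X : (Fin m → L1S) →L[ℂ] (Fin n → L1S)) :
    ofL1V (toL1V X) = X := by
  refine ContinuousLinearMap.ext fun f => ?_
  simp only [toL1V, ofL1V, ContinuousLinearMap.comp_apply, coordP_coordS]

lemma toL1V_comp {l m n : ℕ} (X : (Fin m → L1S) →L[ℂ] (Fin n → L1S))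
    (Y : (Fin l → L1S) →L[ℂ] (Fin m → L1S)) :
    toL1V (X.comp Y) = (toL1V X).comp (toL1V Y) := by
  ext1 f; simp [toL1V, coordP_coordS]

lemma ofL1V_comp {l m n : ℕ} (X : L1V m →L[ℂ] L1V n) (Y : L1V l →L[ℂ] L1V m) :
    ofL1V (X.comp Y) = (ofL1V X).comp (ofL1V Y) := by
  refine ContinuousLinearMap.ext fun f => ?_
  simp only [ofL1V, ContinuousLinearMap.comp_apply, coordS_coordP]

lemma ofL1V_add {m n : ℕ} (X Y : L1V m →L[ℂ] L1V n) :
    ofL1V (X + Y) = ofL1V X + ofL1V Y := by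
  simp [ofL1V, ContinuousLinearMap.add_comp, ContinuousLinearMap.comp_add]

lemma ofL1V_id {m : ℕ} : ofL1V (ContinuousLinearMap.id ℂ (L1V m)) = 1 := by
  refine ContinuousLinearMap.ext fun f => ?_
  simp only [ofL1V, ContinuousLinearMap.comp_apply, coordP_coordS, ContinuousLinearMap.id_apply,
    one_apply_eq_self]

lemma toL1V_add {m n : ℕ} (X Y : (Fin m → L1S) →L[ℂ] (Fin n → L1S)) :
    toL1V (X + Y) = toL1V X + toL1V Y := by
  simp [toL1V, ContinuousLinearMap.add_comp, ContinuousLinearMap.comp_add]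

lemma toL1V_one {m : ℕ} : toL1V (1 : (Fin m → L1S) →L[ℂ] (Fin m → L1S)) =
    ContinuousLinearMap.id ℂ (L1V m) := by
  rw [← ofL1V_id, toL1V_ofL1V]

lemma toL1V_hankel_apply {m n : ℕ} (c : Fin n → Fin m → L1S) (f : L1V m) :
    toL1V (Hm hankelS c) f = coordS n (fun i => ∑ l, hankelS (c i l) (coordP m f l)) :=
  congrArg (coordS n) (funext fun i => Hm_apply _ _ _ i)

lemma sum_hankelS_ae {m : ℕ} (c g : Fin m → L1S) {k f : Fin m → ℝ → ℂ}
    (hk : ∀ l, c l =ᵐ[μP] k l) (hf : ∀ l, g l =ᵐ[μP] f l) :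
    ∀ᵐ t ∂μP, (∀ l, Integrable (fun s => k l (t + s) * f l s) μP) ∧
      (∑ l, hankelS (c l) (g l) : L1S) t = ∑ l, ∫ s, k l (t + s) * f l s ∂μP := by
  have h2 : ∀ᵐ t ∂μP, ∀ l, hankelS (c l) (g l) t = ∫ s, c l (t + s) * g l s ∂μP :=
    ae_all_iff.2 fun l => hankelS_ae (c l) (g l)
  have h3 : ∀ᵐ t ∂μP, ∀ l, (fun s => c l (t + s) * g l s) =ᵐ[μP]
      fun s => k l (t + s) * f l s :=
    ae_all_iff.2 fun l => hankel_congr (hk l) (hf l)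
  have h4 : ∀ᵐ t ∂μP, ∀ l, Integrable (fun s => c l (t + s) * g l s) μP :=
    ae_all_iff.2 fun l => hankel_ae_integrable (c l) (g l)
  filter_upwards [coeFn_finset_sum Finset.univ (fun l => hankelS (c l) (g l)), h2, h3, h4]
    with t g1 g2 g3 g4
  refine ⟨fun l => (g4 l).congr (g3 l), ?_⟩
  rw [g1]
  exact Finset.sum_congr rfl fun l _ => by rw [g2, integral_congr_ae (g3 l)]

lemma toL1V_hankel_ae {m n : ℕ} {k : ℝ → Matrix (Fin n) (Fin m) ℂ} {c : Fin n → Fin m → L1S}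
    (hk : ∀ i j, c i j =ᵐ[μP] fun t => k t i j) (f : L1V m) :
    ⇑(toL1V (Hm hankelS c) f) =ᵐ[μP] fun t => ∫ s in Ici (0:ℝ), (k (t + s)).mulVec (f s) := by
  rw [toL1V_hankel_apply]
  have h1 : ∀ᵐ t ∂μP, ∀ i, (∀ l, Integrable (fun s => k (t + s) i l * f s l) μP) ∧
      (∑ l, hankelS (c i l) (coordP m f l) : L1S) t = ∑ l, ∫ s, k (t + s) i l * f s l ∂μP :=
    ae_all_iff.2 fun i => sum_hankelS_ae (c i) (coordP m f) (k := fun l t => k t i l)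
      (f := fun l t => f t l) (hk i) (coordP_ae f)
  filter_upwards [coordS_ae (fun i => ∑ l, hankelS (c i l) (coordP m f l)), h1] with t g0 g1
  rw [g0]
  funext i
  have g6 : ∀ i, Integrable (fun s => (k (t + s)).mulVec (f s) i) μP := fun i =>
    integrable_finsetSum Finset.univ fun l _ => (g1 i).1 l
  have e : (∫ s in Ici (0:ℝ), (k (t + s)).mulVec (f s)) i =
      ∫ s, (k (t + s)).mulVec (f s) i ∂μP := eval_integral g6 i
  rw [e, (g1 i).2]
  simp only [Matrix.mulVec, dotProduct]
  rw [integral_finsetSum _ fun l _ => (g1 i).1 l]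

lemma IsClassicalHankel.exists_eq {m n : ℕ} {k : ℝ → Matrix (Fin n) (Fin m) ℂ}
    {K : L1V m →L[ℂ] L1V n} (h : IsClassicalHankel k K) :
    ∃ c : Fin n → Fin m → L1S, K = toL1V (Hm hankelS c) := by
  have hi : ∀ i j, Integrable (fun t => k t i j) μP := h.1
  refine ⟨fun i j => (hi i j).toL1 _, ?_⟩
  ext1 f
  apply Lp.ext
  exact (h.2.2 f).trans (toL1V_hankel_ae (fun i j => (hi i j).coeFn_toL1) f).symm

/-- The kernel representative is set to zero on the negative half-line, as `IsClassicalHankel` asks. -/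
lemma exists_isClassicalHankel {m n : ℕ} (c : Fin n → Fin m → L1S) :
    ∃ k, IsClassicalHankel k (toL1V (Hm hankelS c)) := by
  let k : ℝ → Matrix (Fin n) (Fin m) ℂ := fun t => if t < 0 then 0 else fun i j => c i j t
  have hk : ∀ i j, c i j =ᵐ[μP] fun t => k t i j := by
    intro i j
    filter_upwards [ae_nonneg] with t ht
    simp [k, not_lt.2 ht]
  refine ⟨k, fun i j => ?_, fun t ht => if_pos ht, toL1V_hankel_ae hk⟩
  exact (integrable_coe (c i j)).congr (hk i j)

lemma prodOfTwoHankels {m p : ℕ} (a : Fin p → Fin m → L1S) (b : Fin m → Fin p → L1S) :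
    ProdOfTwoHankels ((toL1V (Hm hankelS a)).comp (toL1V (Hm hankelS b))) := by
  obtain ⟨k, hk⟩ := exists_isClassicalHankel a
  obtain ⟨k', hk'⟩ := exists_isClassicalHankel b
  exact ⟨m, _, _, k, k', hk, hk', rfl⟩

/-! ### Hankel operators and derivatives -/

/-- `f(t) = -∫_t^∞ g`, that is, `f` lies in `W^{1,1}(ℝ₊)` and has derivative `g`. Both are classes of
functions in `L¹`. -/
def IsTail {F : Type*} [NormedAddCommGroup F] [NormedSpace ℂ F] (f g : Lp F 1 μP) : Prop :=
  f =ᵐ[μP] fun t => -∫ s in Ioi t, g s ∂μP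

lemma restrict_Ioi_μP {t : ℝ} (ht : 0 ≤ t) : μP.restrict (Ioi t) = volume.restrict (Ioi t) := by
  rw [μP, Measure.restrict_restrict measurableSet_Ioi]
  congr 1
  exact inter_eq_left.2 fun x hx => ht.trans (le_of_lt hx)

lemma restrict_Ioi_zero_μP : μP.restrict (Ioi 0) = μP := by
  rw [restrict_Ioi_μP le_rfl, μP]
  exact Measure.restrict_congr_set Ioi_ae_eq_Ici

instance : NullSingletonClass μP := by unfold μP; infer_instance

lemma integral_Ioi_shift (h : ℝ → ℂ) {x y : ℝ} (hx : 0 ≤ x) (hy : 0 ≤ y) :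
    ∫ τ in Ioi x, h (y + τ) ∂μP = ∫ τ in Ioi (y + x), h τ ∂μP := by
  rw [restrict_Ioi_μP hx, restrict_Ioi_μP (add_nonneg hy hx)]
  have := (measurePreserving_add_left (volume : Measure ℝ) y).setIntegral_preimage_emb
    (measurableEmbedding_addLeft y) h (Ioi (y + x))
  rw [← this]
  congr 2
  ext z; simp

lemma integral_Iio_shift (h : L1S) {s t : ℝ} (hs : 0 ≤ s) (ht : 0 ≤ t) :
    ∫ σ in Iio s, h (t + σ) ∂μP =
      (∫ τ in Ioi t, h τ ∂μP) - ∫ τ in Ioi (t + s), h τ ∂μP := by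
  have hi : Integrable (fun σ => h (t + σ)) μP := by
    simpa only [add_comm] using (shift_integrable (integrable_coe h) ht).1
  have h1 := integral_add_compl (measurableSet_Iio (a := s)) hi
  rw [compl_Iio, integral_Ici_eq_integral_Ioi, integral_Ioi_shift h hs ht] at h1
  have h2 := integral_Ioi_shift h (le_refl 0) ht
  rw [restrict_Ioi_zero_μP, add_zero] at h2
  rw [← h2, ← h1, add_sub_cancel_right]

/-- Integral over `σ < s` of `h (t + σ) g s`, computed in both orders. -/
lemma fubini_tail (h g : L1S) {t : ℝ} (ht : 0 ≤ t) :
    ∫ σ, h (t + σ) * ∫ s in Ioi σ, g s ∂μP ∂μP =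
      ∫ s, ((∫ τ in Ioi t, h τ ∂μP) - ∫ τ in Ioi (t + s), h τ ∂μP) * g s ∂μP := by
  have hi : Integrable (fun σ => h (t + σ)) μP := by
    simpa only [add_comm] using (shift_integrable (integrable_coe h) ht).1
  have hm : MeasurableSet {z : ℝ × ℝ | z.1 < z.2} := measurableSet_lt measurable_fst measurable_snd
  have hF := (hi.mul_prod (integrable_coe g)).indicator hm
  have sw := integral_integral_swap (μ := μP) (ν := μP)
    (f := fun σ s => {z : ℝ × ℝ | z.1 < z.2}.indicator (fun z => h (t + z.1) * g z.2) (σ, s)) hF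
  have e1 : ∀ σ, ∫ s, {z : ℝ × ℝ | z.1 < z.2}.indicator (fun z => h (t + z.1) * g z.2) (σ, s) ∂μP
      = h (t + σ) * ∫ s in Ioi σ, g s ∂μP := by
    intro σ
    rw [← integral_const_mul, ← integral_indicator measurableSet_Ioi]
    rfl
  have e2 : ∀ s, ∫ σ, {z : ℝ × ℝ | z.1 < z.2}.indicator (fun z => h (t + z.1) * g z.2) (σ, s) ∂μP
      = (∫ σ in Iio s, h (t + σ) ∂μP) * g s := by
    intro s
    rw [← integral_mul_const, ← integral_indicator measurableSet_Iio]
    rfl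
  simp only [e1, e2] at sw
  rw [sw]
  refine integral_congr_ae ?_
  filter_upwards [ae_nonneg] with s hs
  rw [integral_Iio_shift h hs ht]

lemma fubini_hankel (h g : L1S) {t : ℝ} (ht : 0 ≤ t) :
    Integrable (fun s => (∫ τ in Ioi (t + s), h τ ∂μP) * g s) μP ∧
    ∫ τ in Ioi t, ∫ s, h (τ + s) * g s ∂μP ∂μP =
      ∫ s, (∫ τ in Ioi (t + s), h τ ∂μP) * g s ∂μP := by
  have hF : Integrable (fun z : ℝ × ℝ => h (z.1 + z.2) * g z.2) ((μP.restrict (Ioi t)).prod μP) := by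
    have := (hankel_prod h g).1.restrict (s := Ioi t ×ˢ univ)
    rwa [← Measure.prod_restrict, Measure.restrict_univ] at this
  have e : ∀ᵐ s ∂μP, ∫ τ in Ioi t, h (τ + s) * g s ∂μP =
      (∫ τ in Ioi (t + s), h τ ∂μP) * g s := by
    filter_upwards [ae_nonneg] with s hs
    rw [integral_mul_const]
    congr 1
    have := integral_Ioi_shift h ht hs
    rw [add_comm t s, ← this]
    simp only [add_comm]
  refine ⟨hF.integral_prod_right.congr e, ?_⟩
  rw [integral_integral_swap (f := fun τ s => h (τ + s) * g s) hF]
  exact integral_congr_ae e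

/-- The integral over `ℝ₊`. -/
def totalInt : L1S →L[ℂ] ℂ :=
  LinearMap.mkContinuous
    { toFun := fun g => ∫ s, g s ∂μP
      map_add' := by
        intro f g
        rw [← integral_add (integrable_coe f) (integrable_coe g)]
        exact integral_congr_ae (Lp.coeFn_add f g)
      map_smul' := by
        intro c f
        rw [RingHom.id_apply, smul_eq_mul, ← integral_const_mul]
        exact integral_congr_ae (Lp.coeFn_smul c f) }
    1 (by
      intro f
      rw [one_mul, norm_eq_integral]
      exact norm_integral_le_integral_norm _)

lemma totalInt_apply (g : L1S) : totalInt g = ∫ s, g s ∂μP := rfl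

/-- The operator `g ↦ (∫ g) h - H_h g`, which sends the derivative of `f` to the derivative of `H_h f`. -/
def hankelD : L1S →L[ℂ] L1S →L[ℂ] L1S :=
  (ContinuousLinearMap.smulRightL ℂ L1S L1S totalInt) - hankelS

lemma hankelD_ae (h g : L1S) : hankelD h g =ᵐ[μP]
    fun t => (∫ s, g s ∂μP) * h t - ∫ s, h (t + s) * g s ∂μP := by
  have e : hankelD h g = totalInt g • h - hankelS h g := rfl
  rw [e]
  filter_upwards [Lp.coeFn_sub (totalInt g • h) (hankelS h g), Lp.coeFn_smul (totalInt g) h,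
    hankelS_ae h g] with t h1 h2 h3
  rw [h1, Pi.sub_apply, h2, Pi.smul_apply, h3, totalInt_apply, smul_eq_mul]

/-- `(H_h f)' = (∫ g) h - H_h g` for `g = f'`. -/
lemma IsTail.hankel {f g : L1S} (hfg : IsTail f g) (h : L1S) :
    IsTail (hankelS h f) (hankelD h g) := by
  filter_upwards [hankelS_ae h f, ae_nonneg, hankel_congr (Filter.EventuallyEq.refl _ h) hfg]
    with t h1 ht h2
  obtain ⟨hi, hsw⟩ := fubini_hankel h g ht
  rw [h1, integral_congr_ae h2, integral_congr_ae (ae_restrict_of_ae (hankelD_ae h g)),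
    integral_sub ((integrable_coe h).const_mul _).restrict (hankel_integrable h g).restrict,
    hsw, integral_const_mul]
  simp only [mul_neg]
  rw [integral_neg, fubini_tail h g ht]
  simp only [sub_mul]
  rw [integral_sub ((integrable_coe g).const_mul _) hi, integral_const_mul, mul_comm (∫ s, g s ∂μP)]

section Tail

variable {F G : Type*} [NormedAddCommGroup F] [NormedSpace ℂ F] [NormedAddCommGroup G]
  [NormedSpace ℂ G]

lemma IsTail.zero : IsTail (0 : Lp F 1 μP) 0 := by
  filter_upwards [Lp.coeFn_zero F 1 μP] with t ht
  rw [ht, integral_congr_ae (ae_restrict_of_ae (Lp.coeFn_zero F 1 μP))]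
  simp

lemma IsTail.add {f g f' g' : Lp F 1 μP} (h : IsTail f g) (h' : IsTail f' g') :
    IsTail (f + f') (g + g') := by
  filter_upwards [Lp.coeFn_add f f', h, h'] with t h1 h2 h3
  rw [h1, Pi.add_apply, h2, h3, integral_congr_ae (ae_restrict_of_ae (Lp.coeFn_add g g')),
    ← neg_add, ← integral_add (integrable_coe g).restrict (integrable_coe g').restrict]
  rfl

lemma IsTail.sum {ι : Type*} (s : Finset ι) {f g : ι → Lp F 1 μP} (h : ∀ i, IsTail (f i) (g i)) :
    IsTail (∑ i ∈ s, f i) (∑ i ∈ s, g i) := by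
  classical
  induction s using Finset.induction_on with
  | empty => simpa using IsTail.zero
  | insert a s ha ih =>
    rw [Finset.sum_insert ha, Finset.sum_insert ha]
    exact (h a).add ih

lemma IsTail.compLpL [CompleteSpace F] [CompleteSpace G] {f g : Lp F 1 μP} (h : IsTail f g)
    (L : F →L[ℂ] G) :
    IsTail (ContinuousLinearMap.compLpL 1 μP L f) (ContinuousLinearMap.compLpL 1 μP L g) := by
  filter_upwards [ContinuousLinearMap.coeFn_compLpL L f, h] with t h1 h2
  rw [h1, h2, map_neg,
    integral_congr_ae (ae_restrict_of_ae (ContinuousLinearMap.coeFn_compLpL L g)),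
    ContinuousLinearMap.integral_comp_comm L (integrable_coe g).restrict]

end Tail

lemma isTail_toL1V_hankel {m n : ℕ} (c : Fin n → Fin m → L1S) {f g : L1V m} (h : IsTail f g) :
    IsTail (toL1V (Hm hankelS c) f) (toL1V (Hm hankelD c) g) := by
  have e : ∀ (H : L1S →L[ℂ] L1S →L[ℂ] L1S) (f : L1V m), toL1V (Hm H c) f =
      ∑ i, (ContinuousLinearMap.compLpL 1 μP (ContinuousLinearMap.single ℂ (fun _ : Fin n => ℂ) i))
        (∑ l, H (c i l) ((ContinuousLinearMap.compLpL 1 μP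
          (ContinuousLinearMap.proj (R := ℂ) (φ := fun _ : Fin m => ℂ) l)) f)) := by
    intro H f
    simp [toL1V, coordS, coordP, Hm_apply]
  rw [e, e]
  exact IsTail.sum _ fun i => (IsTail.sum _ fun l => (h.compLpL _).hankel _).compLpL _

/-! ### Boundedness on the Sobolev space -/

/-- A function that is integrable together with its derivative tends to zero at infinity, so it is minus
the tail integral of its derivative. -/
lemma SobRep.isTail {n : ℕ} {φ φ' : ℝ → Fin n → ℂ} (h : SobRep n φ φ') {f g : L1V n}
    (hf : f =ᵐ[μP] φ) (hg : g =ᵐ[μP] φ') : IsTail f g := by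
  obtain ⟨h1, h2, h3⟩ := h
  have h2' : IntegrableOn φ' (Ioi 0) := h2.mono_set Ioi_subset_Ici_self
  have hlim : Filter.Tendsto φ Filter.atTop (nhds (φ 0 + ∫ s in Ioi 0, φ' s)) := by
    refine ((intervalIntegral_tendsto_integral_Ioi 0 h2' Filter.tendsto_id).const_add
      (φ 0)).congr' ?_
    filter_upwards [Filter.eventually_ge_atTop 0] with t ht
    exact (h3 t ht).symm
  have h0 : φ 0 + ∫ s in Ioi 0, φ' s = 0 := by
    refine IntegrableAtFilter.eq_zero_of_tendsto (μ := volume)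
      ⟨Ici 0, Filter.Ici_mem_atTop 0, h1⟩ ?_ hlim
    intro s hs
    obtain ⟨b, hb⟩ := Filter.mem_atTop_sets.1 hs
    rw [← top_le_iff, ← Real.volume_Ici (a := b)]
    exact measure_mono hb
  filter_upwards [hf, ae_nonneg] with t h4 ht
  have h5 := intervalIntegral.integral_interval_add_Ioi h2' (h2'.mono_set (Ioi_subset_Ioi ht))
  rw [h4, integral_congr_ae (ae_restrict_of_ae hg), restrict_Ioi_μP ht, h3 t ht, eq_neg_iff_add_eq_zero,
    add_assoc, h5, h0]

lemma IsTail.exists_sobRep {n : ℕ} {f g : L1V n} (h : IsTail f g) :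
    ∃ ψ, SobRep n ψ g ∧ f =ᵐ[μP] ψ := by
  refine ⟨fun t => -∫ s in Ioi t, g s ∂μP, ⟨(integrable_coe f).congr h, integrable_coe g, ?_⟩, h⟩
  intro t ht
  have hi : IntegrableOn g (Ioi 0) := IntegrableOn.mono_set (integrable_coe g) Ioi_subset_Ici_self
  have h5 := intervalIntegral.integral_interval_add_Ioi hi (hi.mono_set (Ioi_subset_Ioi ht))
  simp only [restrict_Ioi_μP ht, restrict_Ioi_μP le_rfl]
  rw [← h5]
  abel

/-- `K` maps `W^{1,1}` functions to `W^{1,1}` functions, and the derivative of `K f` is `S f'` for a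
bounded operator `S` on `L¹`. -/
def HasDer {m n : ℕ} (K : L1V m →L[ℂ] L1V n) : Prop :=
  ∃ S : L1V m →L[ℂ] L1V n, ∀ f g, IsTail f g → IsTail (K f) (S g)

lemma HasDer.condH1 {m n : ℕ} {K : L1V m →L[ℂ] L1V n} (h : HasDer K) : CondH1 K := by
  obtain ⟨S, hS⟩ := h
  refine ⟨‖K‖ + ‖S‖, fun φ φ' f hφ hf => ?_⟩
  have hi : Integrable φ' μP := hφ.2.1
  have hg := hi.coeFn_toL1
  set g := hi.toL1 φ'
  obtain ⟨ψ, hψ, hψ'⟩ := (hS f g (hφ.isTail hf hg)).exists_sobRep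
  refine ⟨ψ, _, hψ, hψ', ?_⟩
  have e1 : sobNorm ψ (S g) = ‖K f‖ + ‖S g‖ := by
    rw [norm_eq_integral, norm_eq_integral]
    exact congrArg (· + _) (integral_congr_ae (hψ'.mono fun t ht => (congrArg norm ht).symm))
  have e2 : sobNorm φ φ' = ‖f‖ + ‖g‖ := by
    rw [norm_eq_integral, norm_eq_integral]
    exact congrArg₂ (· + ·) (integral_congr_ae (hf.mono fun t ht => (congrArg norm ht).symm))
      (integral_congr_ae (hg.mono fun t ht => (congrArg norm ht).symm))
  rw [e1, e2]
  have := K.le_opNorm f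
  have := S.le_opNorm g
  have := mul_nonneg (norm_nonneg K) (norm_nonneg g)
  have := mul_nonneg (norm_nonneg S) (norm_nonneg f)
  nlinarith

lemma HasDer.add {m n : ℕ} {K K' : L1V m →L[ℂ] L1V n} (h : HasDer K) (h' : HasDer K') :
    HasDer (K + K') := by
  obtain ⟨S, hS⟩ := h
  obtain ⟨S', hS'⟩ := h'
  exact ⟨S + S', fun f g hfg => (hS f g hfg).add (hS' f g hfg)⟩

lemma HasDer.comp {l m n : ℕ} {K : L1V m →L[ℂ] L1V n} {K' : L1V l →L[ℂ] L1V m} (h : HasDer K)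
    (h' : HasDer K') : HasDer (K.comp K') := by
  obtain ⟨S, hS⟩ := h
  obtain ⟨S', hS'⟩ := h'
  exact ⟨S.comp S', fun f g hfg => hS _ _ (hS' f g hfg)⟩

lemma hasDer_hankel {m n : ℕ} (c : Fin n → Fin m → L1S) : HasDer (toL1V (Hm hankelS c)) :=
  ⟨toL1V (Hm hankelD c), fun _ _ h => isTail_toL1V_hankel c h⟩

lemma ProdOfTwoHankels.hasDer {p : ℕ} {K : L1V p →L[ℂ] L1V p} (h : ProdOfTwoHankels K) :
    HasDer K := by
  obtain ⟨m, A, B, kA, kB, hA, hB, rfl⟩ := h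
  obtain ⟨a, rfl⟩ := hA.exists_eq
  obtain ⟨b, rfl⟩ := hB.exists_eq
  exact (hasDer_hankel a).comp (hasDer_hankel b)

lemma prodOfTwoHankels_zero {p : ℕ} : ProdOfTwoHankels (0 : L1V p →L[ℂ] L1V p) := by
  have h := prodOfTwoHankels (p := p) (m := 0) (fun _ l => l.elim0) (fun l => l.elim0)
  convert h
  refine ContinuousLinearMap.ext fun f => ?_
  rw [ContinuousLinearMap.comp_apply, toL1V_hankel_apply]
  simp only [Finset.univ_eq_empty, Finset.sum_empty]
  exact (map_zero (coordS p)).symm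

lemma Hm_neg_comp {E : Type*} [NormedAddCommGroup E] [NormedSpace ℂ E]
    (H : E →L[ℂ] E →L[ℂ] E) {m p : ℕ} (a : Fin p → Fin m → E) (b : Fin m → Fin p → E) :
    -((Hm H a).comp (Hm H b)) = (Hm H (fun i l => -a i l)).comp (Hm H b) := by
  refine ContinuousLinearMap.ext fun f => funext fun i => ?_
  have h : (-((Hm H a).comp (Hm H b))) f i = -(Hm H a (Hm H b f) i) := rfl
  rw [h, ContinuousLinearMap.comp_apply, Hm_apply, Hm_apply, ← Finset.sum_neg_distrib]
  exact Finset.sum_congr rfl fun l _ => by rw [map_neg, _root_.neg_apply]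

lemma prodOfTwoHankels_neg {m p : ℕ} (a : Fin p → Fin m → L1S) (b : Fin m → Fin p → L1S) :
    ProdOfTwoHankels (toL1V (-((Hm hankelS a).comp (Hm hankelS b)))) := by
  rw [Hm_neg_comp, toL1V_comp]
  exact prodOfTwoHankels _ _

/-- A sum of two products is a single product with juxtaposed kernels. -/
lemma prodOp_append {E : Type*} [NormedAddCommGroup E] [NormedSpace ℂ E]
    (H : E →L[ℂ] E →L[ℂ] E) {p q r : ℕ} (c11 : Fin p → Fin q → E)
    (c12 : Fin q → Fin p → E) (c21 : Fin p → Fin r → E) (c22 : Fin r → Fin p → E) :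
    prodOp H (fun i => Fin.append (c11 i) (c21 i)) (Fin.append c12 c22) =
      1 + (Hm H c11).comp (Hm H c12) + (Hm H c21).comp (Hm H c22) := by
  rw [prodOp, add_assoc]
  congr 1
  refine ContinuousLinearMap.ext fun f => funext fun i => ?_
  simp only [_root_.add_apply, Pi.add_apply, ContinuousLinearMap.comp_apply, Hm_apply,
    Fin.sum_univ_add, Fin.append_left, Fin.append_right]

/-- Lemma A.6: the inverse of `I + H₁₁H₁₂ + H₂₁H₂₂` is `I` plus a sum of
four products of two classical Hankel integral operators; in particular `M⁻¹ = I + K` with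
`K` bounded on the Sobolev space. -/
theorem stmt14 {p q r : ℕ}
    (H11 : L1V q →L[ℂ] L1V p) (k11 : ℝ → Matrix (Fin p) (Fin q) ℂ)
    (h11 : IsClassicalHankel k11 H11)
    (H12 : L1V p →L[ℂ] L1V q) (k12 : ℝ → Matrix (Fin q) (Fin p) ℂ)
    (h12 : IsClassicalHankel k12 H12)
    (H21 : L1V r →L[ℂ] L1V p) (k21 : ℝ → Matrix (Fin p) (Fin r) ℂ)
    (h21 : IsClassicalHankel k21 H21)
    (H22 : L1V p →L[ℂ] L1V r) (k22 : ℝ → Matrix (Fin r) (Fin p) ℂ)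
    (h22 : IsClassicalHankel k22 H22)
    (N : L1V p →L[ℂ] L1V p)
    (hN1 : N.comp (ContinuousLinearMap.id ℂ (L1V p) + H11.comp H12 + H21.comp H22) =
      ContinuousLinearMap.id ℂ (L1V p))
    (hN2 : (ContinuousLinearMap.id ℂ (L1V p) + H11.comp H12 + H21.comp H22).comp N =
      ContinuousLinearMap.id ℂ (L1V p)) :
    ∃ K1 K2 K3 K4 : L1V p →L[ℂ] L1V p,
      ProdOfTwoHankels K1 ∧ ProdOfTwoHankels K2 ∧ ProdOfTwoHankels K3 ∧
      ProdOfTwoHankels K4 ∧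
      N = ContinuousLinearMap.id ℂ (L1V p) + K1 + K2 + K3 + K4 ∧
      CondH1 (K1 + K2 + K3 + K4) := by
  obtain ⟨c11, rfl⟩ := h11.exists_eq
  obtain ⟨c12, rfl⟩ := h12.exists_eq
  obtain ⟨c21, rfl⟩ := h21.exists_eq
  obtain ⟨c22, rfl⟩ := h22.exists_eq
  -- `M = I + H_a H_b` with `a = (c11 c21)` and `b = (c12 ; c22)`.
  set a : Fin p → Fin (q + r) → L1S := fun i => Fin.append (c11 i) (c21 i) with ha
  set b : Fin (q + r) → Fin p → L1S := Fin.append c12 c22 with hb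
  have hM : ofL1V (ContinuousLinearMap.id ℂ (L1V p) +
      (toL1V (Hm hankelS c11)).comp (toL1V (Hm hankelS c12)) +
      (toL1V (Hm hankelS c21)).comp (toL1V (Hm hankelS c22))) = prodOp hankelS a b := by
    rw [ofL1V_add, ofL1V_add, ofL1V_comp, ofL1V_comp, ofL1V_id, ofL1V_toL1V, ofL1V_toL1V,
      ofL1V_toL1V, ofL1V_toL1V, ha, hb, prodOp_append]
  have e1 : ofL1V N * prodOp hankelS a b = 1 := by
    rw [← hM, ← ofL1V_id]
    exact (ofL1V_comp _ _).symm.trans (congrArg ofL1V hN1)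
  have e2 : prodOp hankelS a b * ofL1V N = 1 := by
    rw [← hM, ← ofL1V_id]
    exact (ofL1V_comp _ _).symm.trans (congrArg ofL1V hN2)
  have hu : IsUnit (prodOp hankelS a b) := ⟨⟨_, ofL1V N, e2, e1⟩, rfl⟩
  have hu' := isUnit_transpose hankelS expL lapl hankelS_expL lapl_expL dense_span_expL a b hu
  have hinv := inverse_eq_bezout hankelS expL lapl hankelS_expL lapl_expL dense_span_expL a b hu hu'
  have hN : ofL1V N = Ring.inverse (prodOp hankelS a b) := by
    calc ofL1V N = ofL1V N * (prodOp hankelS a b * Ring.inverse (prodOp hankelS a b)) := by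
          rw [Ring.mul_inverse_cancel _ hu, mul_one]
      _ = _ := by rw [← mul_assoc, e1, one_mul]
  rw [hinv, bezout, sub_eq_add_neg, sub_eq_add_neg] at hN
  have hN' := congrArg toL1V hN
  rw [toL1V_ofL1V, toL1V_add, toL1V_add, toL1V_one] at hN'
  have p1 := prodOfTwoHankels_neg (colAct (Ring.inverse (prodOp hankelS a b)) a)
    (tr (colAct (Ring.inverse (prodOp hankelS (tr b) (tr a))) (tr b)))
  have p2 := prodOfTwoHankels_neg
    (colAct (Ring.inverse (prodOp hankelS a b)) (colAct (Hm hankelS a) b))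
    (tr (colAct (Ring.inverse (prodOp hankelS (tr b) (tr a))) (colAct (Hm hankelS (tr b)) (tr a))))
  have p0 := prodOfTwoHankels_zero (p := p)
  exact ⟨_, _, 0, 0, p1, p2, p0, p0, by rw [add_zero, add_zero]; exact hN',
    (((p1.hasDer.add p2.hasDer).add p0.hasDer).add p0.hasDer).condH1⟩
end
end

section
/- Let α, β, γ, δ be p×p complex matrices with α and β upper triangular, γ and δ lower triangular, α invertible and δ invertible. Assume α*α − γ*γ = diag(α) and δ*δ − β*β = diag(δ). Then g₁ = −up((α*)⁻¹γ*) is the unique upper triangular matrix such that α + g₁γ − I is strictly lower triangular and g₁*α + γ is strictly upper triangular; g₂ = −up(βδ⁻¹) is the unique upper triangular matrix such that g₂δ + β is strictly lower triangular and δ + g₂*β − I is strictly upper triangular; and g₁ = g₂ if and only if α*β = γ*δ. -/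
/-!
Write `X = (α*)⁻¹ γ*` and `Y = β δ⁻¹`. Replacing `X` by `up X` changes it by a strictly lower
triangular matrix `s`, so `g₁ = -X + s` and

* `g₁* α + γ = s* α` is strictly upper triangular;
* `α + g₁ γ - 1 = (α*)⁻¹ (α* α - γ* γ) - 1 + s γ = ((α*)⁻¹ diag α - 1) + s γ`, which is strictly
  lower triangular because `(α*)⁻¹` is lower triangular with the inverse diagonal of `α*`, and
  `diag α`, being a difference of Hermitian matrices, is real.

Conversely, if `g* α + γ` is strictly upper triangular then `g + X` is strictly lower triangular,
which pins down an upper triangular `g`. The statements about `g₂` are the mirror images.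

For the coupling, `α* β = γ* δ` says `X = Y`, hence `g₁ = g₂`. If `g = g₁ = g₂`, put
`L₁ = α + g γ - 1`, `U₁ = g* α + γ`, `L₂ = g δ + β`, `U₂ = δ + g* β - 1`. Then
`α* β - γ* δ` equals both `α* L₂ - U₁* δ`, which is strictly lower triangular, and
`(1 + L₁*) β - γ* (1 + U₂)`, which is upper triangular; so it vanishes.
-/

open Matrix

noncomputable section

/-- The upper triangular part of a matrix. -/
def up {p : ℕ} (m : Matrix (Fin p) (Fin p) ℂ) : Matrix (Fin p) (Fin p) ℂ :=
  Matrix.of fun i j => if i ≤ j then m i j else 0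

/-- The diagonal part of a matrix. -/
def diagPart {p : ℕ} (m : Matrix (Fin p) (Fin p) ℂ) : Matrix (Fin p) (Fin p) ℂ :=
  Matrix.diagonal fun i => m i i

def UpperTri {p : ℕ} (m : Matrix (Fin p) (Fin p) ℂ) : Prop := ∀ i j, j < i → m i j = 0
def LowerTri {p : ℕ} (m : Matrix (Fin p) (Fin p) ℂ) : Prop := ∀ i j, i < j → m i j = 0
def StrictUpperTri {p : ℕ} (m : Matrix (Fin p) (Fin p) ℂ) : Prop := ∀ i j, j ≤ i → m i j = 0
def StrictLowerTri {p : ℕ} (m : Matrix (Fin p) (Fin p) ℂ) : Prop := ∀ i j, i ≤ j → m i j = 0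

section Triangular

variable {p : ℕ} {A B : Matrix (Fin p) (Fin p) ℂ}

lemma StrictUpperTri.upper (h : StrictUpperTri A) : UpperTri A := fun i j hij => h i j hij.le

lemma UpperTri.conjTranspose (h : UpperTri A) : LowerTri Aᴴ := fun i j hij => by
  simp [h j i hij]

lemma LowerTri.conjTranspose (h : LowerTri A) : UpperTri Aᴴ := fun i j hij => by
  simp [h j i hij]

lemma StrictUpperTri.conjTranspose (h : StrictUpperTri A) : StrictLowerTri Aᴴ := fun i j hij => by
  simp [h j i hij]

lemma StrictLowerTri.conjTranspose (h : StrictLowerTri A) : StrictUpperTri Aᴴ := fun i j hij => by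
  simp [h j i hij]

lemma StrictLowerTri.add (hA : StrictLowerTri A) (hB : StrictLowerTri B) :
    StrictLowerTri (A + B) := fun i j hij => by simp [hA i j hij, hB i j hij]

lemma StrictLowerTri.sub (hA : StrictLowerTri A) (hB : StrictLowerTri B) :
    StrictLowerTri (A - B) := fun i j hij => by simp [hA i j hij, hB i j hij]

lemma StrictUpperTri.add (hA : StrictUpperTri A) (hB : StrictUpperTri B) :
    StrictUpperTri (A + B) := fun i j hij => by simp [hA i j hij, hB i j hij]

lemma UpperTri.add (hA : UpperTri A) (hB : UpperTri B) : UpperTri (A + B) :=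
  fun i j hij => by simp [hA i j hij, hB i j hij]

lemma UpperTri.sub (hA : UpperTri A) (hB : UpperTri B) : UpperTri (A - B) :=
  fun i j hij => by simp [hA i j hij, hB i j hij]

lemma upperTri_one : UpperTri (1 : Matrix (Fin p) (Fin p) ℂ) :=
  fun _ _ hij => Matrix.one_apply_ne hij.ne'

lemma UpperTri.mul (hA : UpperTri A) (hB : UpperTri B) : UpperTri (A * B) := fun i j hij => by
  rw [Matrix.mul_apply]
  refine Finset.sum_eq_zero fun k _ => ?_
  rcases lt_or_ge k i with h | h
  · simp [hA i k h]
  · simp [hB k j (hij.trans_le h)]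

lemma StrictLowerTri.mul_lower (hA : StrictLowerTri A) (hB : LowerTri B) :
    StrictLowerTri (A * B) := fun i j hij => by
  rw [Matrix.mul_apply]
  refine Finset.sum_eq_zero fun k _ => ?_
  rcases le_or_gt i k with h | h
  · simp [hA i k h]
  · simp [hB k j (h.trans_le hij)]

lemma LowerTri.mul_strict (hA : LowerTri A) (hB : StrictLowerTri B) :
    StrictLowerTri (A * B) := fun i j hij => by
  rw [Matrix.mul_apply]
  refine Finset.sum_eq_zero fun k _ => ?_
  rcases lt_or_ge i k with h | h
  · simp [hA i k h]
  · simp [hB k j (h.trans hij)]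

lemma StrictUpperTri.mul_upper (hA : StrictUpperTri A) (hB : UpperTri B) :
    StrictUpperTri (A * B) := by
  have h := (hB.conjTranspose.mul_strict hA.conjTranspose).conjTranspose
  simpa [Matrix.conjTranspose_mul] using h

lemma LowerTri.mul_diag (hA : LowerTri A) (hB : LowerTri B) (i : Fin p) :
    (A * B) i i = A i i * B i i := by
  rw [Matrix.mul_apply]
  refine Finset.sum_eq_single i (fun k _ hk => ?_) (by simp)
  rcases lt_or_gt_of_ne hk with h | h
  · simp [hB k i h]
  · simp [hA i k h]

lemma LowerTri.inv (hA : LowerTri A) (hu : IsUnit A) : LowerTri A⁻¹ := by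
  have := hu.invertible
  have hb : A.BlockTriangular OrderDual.toDual := fun i j hij => hA i j hij
  exact fun i j hij => Matrix.blockTriangular_inv_of_blockTriangular hb hij

lemma LowerTri.inv_diag (hA : LowerTri A) (hu : IsUnit A) (i : Fin p) :
    A⁻¹ i i * A i i = 1 := by
  rw [← (hA.inv hu).mul_diag hA, Matrix.nonsing_inv_mul _ ((Matrix.isUnit_iff_isUnit_det A).1 hu),
    Matrix.one_apply_eq]

lemma eq_zero_of_strictLower_upper (hl : StrictLowerTri A) (hu : UpperTri A) : A = 0 := by
  ext i j
  rcases le_or_gt i j with h | h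
  · exact hl i j h
  · exact hu i j h

lemma upperTri_neg_up (m : Matrix (Fin p) (Fin p) ℂ) : UpperTri (-up m) := fun i j hij => by
  simp [up, not_le.2 hij]

lemma strictLower_sub_up (m : Matrix (Fin p) (Fin p) ℂ) : StrictLowerTri (m - up m) :=
  fun i j hij => by simp [up, hij]

/-- An upper triangular matrix is determined by its class modulo strictly lower triangular ones. -/
lemma eq_neg_up {g m : Matrix (Fin p) (Fin p) ℂ} (hg : UpperTri g)
    (h : StrictLowerTri (g + m)) : g = -up m := by
  rw [← sub_eq_zero]
  refine eq_zero_of_strictLower_upper ?_ (hg.sub (upperTri_neg_up m))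
  have := h.sub (strictLower_sub_up m)
  convert this using 1
  abel

/-- The hypothesis exhibits `diagPart M` as a difference of Hermitian matrices. -/
lemma diag_real {M N : Matrix (Fin p) (Fin p) ℂ} (h : Mᴴ * M - Nᴴ * N = diagPart M) (i : Fin p) :
    star (M i i) = M i i := by
  have h' : (diagPart M)ᴴ = diagPart M := by
    rw [← h]; simp [Matrix.conjTranspose_mul]
  simpa [diagPart] using congrFun (congrFun h' i) i

lemma strictLower_inv_mul_diagPart {M : Matrix (Fin p) (Fin p) ℂ} (hM : UpperTri M)
    (hu : IsUnit M) (hr : ∀ i, star (M i i) = M i i) :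
    StrictLowerTri ((Mᴴ)⁻¹ * diagPart M - 1) := fun i j hij => by
  have huM : IsUnit Mᴴ := hu.star
  rw [Matrix.sub_apply, diagPart, Matrix.mul_diagonal]
  rcases hij.lt_or_eq with h | rfl
  · simp [hM.conjTranspose.inv huM i j h, Matrix.one_apply_ne h.ne]
  · have := hM.conjTranspose.inv_diag huM i
    rw [Matrix.conjTranspose_apply, hr] at this
    simp [this]

lemma strictUpper_inv_mul_diagPart {M : Matrix (Fin p) (Fin p) ℂ} (hM : LowerTri M)
    (hu : IsUnit M) (hr : ∀ i, star (M i i) = M i i) :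
    StrictUpperTri ((Mᴴ)⁻¹ * diagPart M - 1) := fun i j hij => by
  rw [Matrix.sub_apply, diagPart, Matrix.mul_diagonal, ← Matrix.conjTranspose_nonsing_inv,
    Matrix.conjTranspose_apply]
  rcases hij.lt_or_eq with h | rfl
  · simp [hM.inv hu j i h, Matrix.one_apply_ne h.ne']
  · have := hM.inv_diag hu j
    rw [← hr j, ← star_mul', this]
    simp

end Triangular

/-- Theorem 8.1 specialised to matrices: the two onefold problems and
their coupling. -/
theorem stmt18 {p : ℕ} (α β γ δ : Matrix (Fin p) (Fin p) ℂ)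
    (hα : UpperTri α) (hβ : UpperTri β) (hγ : LowerTri γ) (hδ : LowerTri δ)
    (hαinv : IsUnit α) (hδinv : IsUnit δ)
    (h1 : αᴴ * α - γᴴ * γ = diagPart α) (h2 : δᴴ * δ - βᴴ * β = diagPart δ) :
    (UpperTri (-up ((αᴴ)⁻¹ * γᴴ)) ∧
      StrictLowerTri (α + (-up ((αᴴ)⁻¹ * γᴴ)) * γ - 1) ∧
      StrictUpperTri ((-up ((αᴴ)⁻¹ * γᴴ))ᴴ * α + γ)) ∧
    (∀ g : Matrix (Fin p) (Fin p) ℂ, UpperTri g →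
      StrictLowerTri (α + g * γ - 1) → StrictUpperTri (gᴴ * α + γ) →
      g = -up ((αᴴ)⁻¹ * γᴴ)) ∧
    (UpperTri (-up (β * δ⁻¹)) ∧
      StrictLowerTri ((-up (β * δ⁻¹)) * δ + β) ∧
      StrictUpperTri (δ + (-up (β * δ⁻¹))ᴴ * β - 1)) ∧
    (∀ g : Matrix (Fin p) (Fin p) ℂ, UpperTri g →
      StrictLowerTri (g * δ + β) → StrictUpperTri (δ + gᴴ * β - 1) →
      g = -up (β * δ⁻¹)) ∧
    (-up ((αᴴ)⁻¹ * γᴴ) = -up (β * δ⁻¹) ↔ αᴴ * β = γᴴ * δ) := by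
  have hαd := (Matrix.isUnit_iff_isUnit_det α).1 hαinv
  have hδd := (Matrix.isUnit_iff_isUnit_det δ).1 hδinv
  have hαsd := (Matrix.isUnit_iff_isUnit_det αᴴ).1 hαinv.star
  have hδsd := (Matrix.isUnit_iff_isUnit_det δᴴ).1 hδinv.star
  have hX : ((αᴴ)⁻¹ * γᴴ)ᴴ * α = γ := by
    rw [Matrix.conjTranspose_mul, Matrix.conjTranspose_nonsing_inv,
      Matrix.conjTranspose_conjTranspose, Matrix.conjTranspose_conjTranspose,
      Matrix.nonsing_inv_mul_cancel_right _ _ hαd]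
  have hX' : αᴴ * ((αᴴ)⁻¹ * γᴴ) = γᴴ := Matrix.mul_nonsing_inv_cancel_left _ _ hαsd
  have hY : β * δ⁻¹ * δ = β := Matrix.nonsing_inv_mul_cancel_right _ _ hδd
  have hXγ : (αᴴ)⁻¹ * γᴴ * γ = α - (αᴴ)⁻¹ * diagPart α := by
    rw [← h1, mul_sub, Matrix.nonsing_inv_mul_cancel_left _ _ hαsd, mul_assoc]; abel
  have hYβ : (β * δ⁻¹)ᴴ * β = δ - (δᴴ)⁻¹ * diagPart δ := by
    rw [← h2, mul_sub, Matrix.nonsing_inv_mul_cancel_left _ _ hδsd, Matrix.conjTranspose_mul,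
      Matrix.conjTranspose_nonsing_inv, mul_assoc]; abel
  have hXY : (αᴴ)⁻¹ * γᴴ = β * δ⁻¹ ↔ αᴴ * β = γᴴ * δ := by
    constructor
    · intro h
      rw [← hX', h, mul_assoc, hY]
    · intro h
      rw [← Matrix.mul_nonsing_inv_cancel_right δ γᴴ hδd, ← h, mul_assoc,
        Matrix.nonsing_inv_mul_cancel_left _ _ hαsd]
  have hαid := strictLower_inv_mul_diagPart hα hαinv (diag_real h1)
  have hδid := strictUpper_inv_mul_diagPart hδ hδinv (diag_real h2)
  -- From here on only the identities above are needed, not the formulas for `X` and `Y`.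
  generalize (αᴴ)⁻¹ * γᴴ = X at *
  generalize β * δ⁻¹ = Y at *
  have hs := strictLower_sub_up X
  have ht := strictLower_sub_up Y
  have a1 : StrictLowerTri (α + (-up X) * γ - 1) := by
    have e : α + (-up X) * γ - 1 = ((αᴴ)⁻¹ * diagPart α - 1) + (X - up X) * γ := by
      rw [sub_mul, hXγ, neg_mul]; abel
    rw [e]
    exact hαid.add (hs.mul_lower hγ)
  have a2 : StrictUpperTri ((-up X)ᴴ * α + γ) := by
    have e : (-up X)ᴴ * α + γ = (X - up X)ᴴ * α := by
      rw [Matrix.conjTranspose_sub, sub_mul, hX, Matrix.conjTranspose_neg, neg_mul]; abel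
    rw [e]
    exact hs.conjTranspose.mul_upper hα
  have b1 : StrictLowerTri ((-up Y) * δ + β) := by
    have e : (-up Y) * δ + β = (Y - up Y) * δ := by
      rw [sub_mul, hY, neg_mul]; abel
    rw [e]
    exact ht.mul_lower hδ
  have b2 : StrictUpperTri (δ + (-up Y)ᴴ * β - 1) := by
    have e : δ + (-up Y)ᴴ * β - 1 = ((δᴴ)⁻¹ * diagPart δ - 1) + (Y - up Y)ᴴ * β := by
      rw [Matrix.conjTranspose_sub, sub_mul, hYβ, Matrix.conjTranspose_neg, neg_mul]; abel
    rw [e]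
    exact hδid.add (ht.conjTranspose.mul_upper hβ)
  refine ⟨⟨upperTri_neg_up X, a1, a2⟩, ?_, ⟨upperTri_neg_up Y, b1, b2⟩, ?_, ?_⟩
  · intro g hg _ h
    refine eq_neg_up hg ?_
    have e : g + X = (αᴴ)⁻¹ * (gᴴ * α + γ)ᴴ := by
      rw [Matrix.conjTranspose_add, Matrix.conjTranspose_mul, Matrix.conjTranspose_conjTranspose,
        ← hX', ← mul_add, Matrix.nonsing_inv_mul_cancel_left _ _ hαsd]
    rw [e]
    exact (hα.conjTranspose.inv hαinv.star).mul_strict h.conjTranspose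
  · intro g hg h _
    refine eq_neg_up hg ?_
    have e : g + Y = (g * δ + β) * δ⁻¹ := by
      rw [← hY, ← add_mul, Matrix.mul_nonsing_inv_cancel_right _ _ hδd]
    rw [e]
    exact h.mul_lower (hδ.inv hδinv)
  · refine ⟨fun h => ?_, fun h => by rw [hXY.2 h]⟩
    rw [← h] at b1 b2
    generalize -up X = g at *
    rw [← sub_eq_zero]
    refine eq_zero_of_strictLower_upper ?_ ?_
    · have e : αᴴ * β - γᴴ * δ = αᴴ * (g * δ + β) - (gᴴ * α + γ)ᴴ * δ := by
        simp only [Matrix.conjTranspose_add, Matrix.conjTranspose_mul,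
          Matrix.conjTranspose_conjTranspose]
        noncomm_ring
      rw [e]
      exact (hα.conjTranspose.mul_strict b1).sub (a2.conjTranspose.mul_lower hδ)
    · have e : αᴴ * β - γᴴ * δ =
          (1 + (α + g * γ - 1)ᴴ) * β - γᴴ * (1 + (δ + gᴴ * β - 1)) := by
        simp only [Matrix.conjTranspose_add, Matrix.conjTranspose_sub, Matrix.conjTranspose_mul,
          Matrix.conjTranspose_one]
        noncomm_ring
      rw [e]
      exact ((upperTri_one.add a1.conjTranspose.upper).mul hβ).sub
        (hγ.conjTranspose.mul (upperTri_one.add b2.upper))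
end
end
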